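/- arXiv:1806.08872 — 7 statements merged into one kernel-verified Lean document; each statement's English description precedes it below -/
import Mathlib

section
/- The set of pseudo-square-free positive integers has natural density 1; that is, if D denotes the set of pseudo-square-free positive integers, then |D ∩ {1,…,N}| / N → 1 as N → ∞. -/
/-- A positive integer `n` is *pseudo-square-free* if for every prime `p` dividing `n`:
if `p > log log n` then `p² ∤ n`, and if `p ≤ log log n` then `p ^ (v_p n) ≤ log n`,
where `v_p n` is the `p`-adic valuation of `n` and `log` is the natural logarithm. -/
def PseudoSquareFree (n : ℕ) : Prop :=
  ∀ p : ℕ, p.Prime → p ∣ n →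
    (Real.log (Real.log n) < (p : ℝ) → ¬ (p ^ 2 ∣ n)) ∧
    ((p : ℝ) ≤ Real.log (Real.log n) → (p : ℝ) ^ (n.factorization p) ≤ Real.log n)

open Classical in
/-- For large `n`, failure to be pseudo-square-free gives a divisor from a fixed family. -/
lemma bad_dvd (K : ℕ) (hK : 1 ≤ K) : ∃ n0 : ℕ, ∀ n : ℕ, n0 ≤ n → ¬ PseudoSquareFree n →
    (∃ p, K < p ∧ p ^ 2 ∣ n) ∨ (∃ p, 2 ≤ p ∧ p ≤ K ∧ p ^ (2 * K) ∣ n) := by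
  have h1 : Filter.Tendsto (fun n : ℕ => Real.log (n : ℝ)) Filter.atTop Filter.atTop :=
    Real.tendsto_log_atTop.comp tendsto_natCast_atTop_atTop
  have h2 := Real.tendsto_log_atTop.comp h1
  obtain ⟨n0, hn0⟩ := Filter.eventually_atTop.1
    ((h1.eventually_ge_atTop ((K : ℝ) ^ (2 * K))).and ((h2.eventually_ge_atTop (K : ℝ)).and
      (Filter.eventually_ge_atTop 1)))
  refine ⟨n0, fun n hn hbad => ?_⟩
  obtain ⟨hA, hB, hC⟩ := hn0 n hn
  simp only [Function.comp] at hB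
  unfold PseudoSquareFree at hbad
  push Not at hbad
  obtain ⟨p, hp, hpn, h⟩ := hbad
  have hKpow : (1 : ℝ) ≤ (K : ℝ) ^ (2 * K) := one_le_pow₀ (by exact_mod_cast hK)
  have hlogpos : 0 < Real.log n := by linarith
  by_cases hc : Real.log (Real.log n) < p → ¬ (p ^ 2 ∣ n)
  · obtain ⟨hle, hlt⟩ := h hc
    by_cases hpK : p ≤ K
    · right
      refine ⟨p, hp.two_le, hpK, ?_⟩
      have : (p : ℝ) ^ (2 * K) < (p : ℝ) ^ (n.factorization p) := by
        refine lt_of_le_of_lt ?_ hlt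
        refine le_trans ?_ hA
        gcongr
      have h3 : 2 * K < n.factorization p :=
        (pow_lt_pow_iff_right₀ (by exact_mod_cast hp.one_lt)).1 this
      exact (pow_dvd_pow p h3.le).trans (Nat.ordProj_dvd n p)
    · left
      refine ⟨p, by omega, ?_⟩
      have h4 : (p : ℝ) < Real.log n := by
        have := Real.add_one_le_exp (Real.log (Real.log n))
        rw [Real.exp_log hlogpos] at this
        linarith
      have : (p : ℝ) ^ 1 < (p : ℝ) ^ (n.factorization p) := by
        rw [pow_one]; linarith
      have h3 : 1 < n.factorization p :=
        (pow_lt_pow_iff_right₀ (by exact_mod_cast hp.one_lt)).1 this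
      exact (pow_dvd_pow p h3).trans (Nat.ordProj_dvd n p)
  · left
    push Not at hc
    exact ⟨p, by exact_mod_cast hB.trans_lt hc.1, hc.2⟩

lemma card_mult (N c : ℕ) :
    (((Finset.Ioc 0 N).filter (fun n => c ∣ n)).card : ℝ) ≤ N * ((c : ℝ))⁻¹ := by
  rw [Nat.Ioc_filter_dvd_card_eq_div, ← div_eq_mul_inv]
  exact Nat.cast_div_le

open Classical in
lemma bad_card (K : ℕ) (hK : 1 ≤ K) : ∃ n0 : ℕ, ∀ N : ℕ, K ≤ N →
    (((Finset.Ioc 0 N).filter (fun n => ¬ PseudoSquareFree n)).card : ℝ)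
      ≤ n0 + 2 * N * (K : ℝ)⁻¹ := by
  obtain ⟨n0, h⟩ := bad_dvd K hK
  refine ⟨n0, fun N hN => ?_⟩
  have hK0 : (0 : ℝ) < K := by exact_mod_cast hK
  have hsub : (Finset.Ioc 0 N).filter (fun n => ¬ PseudoSquareFree n) ⊆
      Finset.range n0 ∪
      (((Finset.Ioc K N).biUnion fun p => (Finset.Ioc 0 N).filter (fun n => p ^ 2 ∣ n)) ∪
      ((Finset.Icc 2 K).biUnion fun p => (Finset.Ioc 0 N).filter (fun n => p ^ (2 * K) ∣ n))) := by
    intro n hn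
    simp only [Finset.mem_filter, Finset.mem_Ioc] at hn
    simp only [Finset.mem_union, Finset.mem_range, Finset.mem_biUnion, Finset.mem_filter,
      Finset.mem_Ioc, Finset.mem_Icc]
    by_cases hlt : n < n0
    · exact Or.inl hlt
    right
    rcases h n (by omega) hn.2 with ⟨p, hp, hd⟩ | ⟨p, hp, hp2, hd⟩
    · left
      refine ⟨p, ⟨hp, ?_⟩, hn.1, hd⟩
      have := Nat.le_of_dvd hn.1.1 hd
      nlinarith [hn.1.2]
    · exact Or.inr ⟨p, ⟨hp, hp2⟩, hn.1, hd⟩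
  have hcard := (Finset.card_le_card hsub).trans ((Finset.card_union_le _ _).trans
    (Nat.add_le_add_left ((Finset.card_union_le _ _).trans
      (Nat.add_le_add Finset.card_biUnion_le Finset.card_biUnion_le)) _))
  rw [Finset.card_range] at hcard
  have hcard' := (Nat.cast_le (α := ℝ)).2 hcard
  push_cast at hcard'
  refine hcard'.trans ?_
  have e1 : (∑ p ∈ Finset.Ioc K N,
      (((Finset.Ioc 0 N).filter (fun n => p ^ 2 ∣ n)).card : ℝ)) ≤ N * (K : ℝ)⁻¹ := by
    calc _ ≤ ∑ p ∈ Finset.Ioc K N, (N : ℝ) * ((p : ℝ) ^ 2)⁻¹ := by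
          refine Finset.sum_le_sum fun p _ => ?_
          exact_mod_cast card_mult N (p ^ 2)
      _ = N * ∑ p ∈ Finset.Ioc K N, ((p : ℝ) ^ 2)⁻¹ := by rw [Finset.mul_sum]
      _ ≤ _ := by
          have := sum_Ioc_inv_sq_le_sub (α := ℝ) (by omega : K ≠ 0) hN
          have h0 : (0 : ℝ) ≤ (N : ℝ)⁻¹ := by positivity
          gcongr
          linarith
  have e2 : (∑ p ∈ Finset.Icc 2 K,
      (((Finset.Ioc 0 N).filter (fun n => p ^ (2 * K) ∣ n)).card : ℝ)) ≤ N * (K : ℝ)⁻¹ := by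
    calc _ ≤ ∑ p ∈ Finset.Icc 2 K, (N : ℝ) * ((K : ℝ) ^ 2)⁻¹ := by
          refine Finset.sum_le_sum fun p hp => (card_mult N (p ^ (2 * K))).trans ?_
          have h2 : K ^ 2 ≤ p ^ (2 * K) := by
            rw [mul_comm, pow_mul]
            apply Nat.pow_le_pow_left
            exact Nat.lt_two_pow_self.le.trans
              (Nat.pow_le_pow_left (Finset.mem_Icc.1 hp).1 K)
          have h3 : (K : ℝ) ^ 2 ≤ ((p ^ (2 * K) : ℕ) : ℝ) := by exact_mod_cast h2
          gcongr
      _ = ((K + 1 - 2 : ℕ) : ℝ) * (N * ((K : ℝ) ^ 2)⁻¹) := by simp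
      _ ≤ K * (N * ((K : ℝ) ^ 2)⁻¹) := by
          gcongr
          omega
      _ = _ := by field_simp
  linarith

/-- The set of pseudo-square-free positive integers has natural density `1`. -/
theorem pseudoSquareFree_density_one :
    Filter.Tendsto (fun N : ℕ =>
      (Nat.card {n : ℕ | n ∈ Finset.Icc 1 N ∧ PseudoSquareFree n} : ℝ) / N)
      Filter.atTop (nhds 1) := by
  classical
  have key : ∀ N : ℕ, (Nat.card {n : ℕ | n ∈ Finset.Icc 1 N ∧ PseudoSquareFree n} : ℝ)
      + (((Finset.Ioc 0 N).filter (fun n => ¬ PseudoSquareFree n)).card : ℝ) = N := by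
    intro N
    have h1 : {n : ℕ | n ∈ Finset.Icc 1 N ∧ PseudoSquareFree n} =
        (((Finset.Ioc 0 N).filter (fun n => PseudoSquareFree n) : Finset ℕ) : Set ℕ) := by
      ext n
      simp [Nat.succ_le_iff]
    rw [h1, Nat.card_coe_set_eq, Set.ncard_coe_finset]
    have := Finset.card_filter_add_card_filter_not (s := Finset.Ioc 0 N) PseudoSquareFree
    rw [Nat.card_Ioc] at this
    exact_mod_cast this
  rw [Metric.tendsto_atTop]
  intro ε hε
  obtain ⟨K, hK⟩ := exists_nat_gt (4 / ε)
  have hK0 : (0 : ℝ) < K := lt_trans (by positivity) hK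
  obtain ⟨n0, hb⟩ := bad_card K (by exact_mod_cast hK0)
  obtain ⟨M, hM⟩ := exists_nat_gt (2 * n0 / ε)
  refine ⟨max K M, fun N hN => ?_⟩
  have hNK : K ≤ N := (le_max_left _ _).trans hN
  have hNM : M ≤ N := (le_max_right _ _).trans hN
  have hbN := hb N hNK
  have hk := key N
  have hN0 : (0 : ℝ) < N := hK0.trans_le (by exact_mod_cast hNK)
  have hMN : (M : ℝ) ≤ N := by exact_mod_cast hNM
  have hn : 2 * (n0 : ℝ) < N * ε := by
    rw [div_lt_iff₀ hε] at hM
    nlinarith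
  have hk2 : (K : ℝ)⁻¹ < ε / 4 := by
    rw [inv_lt_comm₀ hK0 (by positivity)]
    simpa using hK
  set B := (((Finset.Ioc 0 N).filter (fun n => ¬ PseudoSquareFree n)).card : ℝ) with hB
  have hB0 : 0 ≤ B := by positivity
  have hlt : B < ε * N := by nlinarith
  rw [Real.dist_eq, abs_lt]
  constructor
  · rw [lt_sub_iff_add_lt, lt_div_iff₀ hN0]
    nlinarith
  · rw [sub_lt_iff_lt_add, div_lt_iff₀ hN0]
    nlinarith
end

section
/- Let N(x) denote the number of positive integers n with 3 ≤ n ≤ x for which there exists a prime p ≤ log log n such that the exact power p^e dividing n (i.e., e = v_p(n)) satisfies p^e > log n. Then N(x)/x → 0 as x → ∞; in other words, for almost all positive integers n, every prime p ≤ log log n dividing n satisfies p^{v_p(n)} ≤ log n. -/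
open Filter in
/-- The main finite counting bound. -/
theorem count_bound_aux (x : ℕ) (hx : 3 ≤ x) :
    (Nat.card {n : ℕ | n ∈ Finset.Icc 3 x ∧ ∃ p : ℕ, p.Prime ∧
          (p : ℝ) ≤ Real.log (Real.log n) ∧
          Real.log n < (p : ℝ) ^ (n.factorization p)} : ℝ) ≤
      Real.sqrt x + Real.log (Real.log x) * (x / (Real.log x / 2)) := by
  set L : ℝ := Real.log x / 2 with hL
  set M : ℕ := ⌊Real.log (Real.log x)⌋₊ with hM
  have hlog3 : ∀ n : ℕ, 3 ≤ n → 1 < Real.log n := by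
    intro n hn
    rw [Real.lt_log_iff_exp_lt (by positivity)]
    have h := Real.exp_one_lt_d9
    have : (3 : ℝ) ≤ n := by exact_mod_cast hn
    linarith
  have hlx := hlog3 x hx
  have hLpos : 0 < L := by rw [hL]; linarith
  have hll : 0 ≤ Real.log (Real.log x) := Real.log_nonneg hlx.le
  let k : ℕ → ℕ := fun p => Nat.clog p (⌊L⌋₊ + 1)
  let T : Finset ℕ := Finset.Ioc 0 (Nat.sqrt x) ∪
    ((Finset.Ioc 0 M).filter Nat.Prime).biUnion
      (fun p => (Finset.Ioc 0 x).filter (fun n => p ^ k p ∣ n))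
  have hsub : {n : ℕ | n ∈ Finset.Icc 3 x ∧ ∃ p : ℕ, p.Prime ∧
          (p : ℝ) ≤ Real.log (Real.log n) ∧
          Real.log n < (p : ℝ) ^ (n.factorization p)} ⊆ (T : Set ℕ) := by
    rintro n ⟨hn, p, hp, hpl, hpe⟩
    rw [Finset.mem_Icc] at hn
    have hln := hlog3 n hn.1
    have hnpos : (0 : ℝ) < n := by
      have : 0 < n := by omega
      exact_mod_cast this
    rw [Finset.mem_coe, Finset.mem_union]
    by_cases hs : n ≤ Nat.sqrt x
    · left
      rw [Finset.mem_Ioc]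
      omega
    · right
      rw [Finset.mem_biUnion]
      have hsq : x < n * n := Nat.sqrt_lt.mp (not_le.mp hs)
      have hLn : L ≤ Real.log n := by
        have h1 : Real.log x ≤ Real.log ((n : ℝ) * n) := by
          apply Real.log_le_log
          · have : 0 < x := by omega
            exact_mod_cast this
          · exact_mod_cast hsq.le
        rw [Real.log_mul hnpos.ne' hnpos.ne'] at h1
        rw [hL]; linarith
      refine ⟨p, ?_, ?_⟩
      · rw [Finset.mem_filter, Finset.mem_Ioc]
        refine ⟨⟨hp.pos, ?_⟩, hp⟩
        apply Nat.le_floor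
        refine hpl.trans ?_
        apply Real.log_le_log (by linarith)
        apply Real.log_le_log hnpos
        exact_mod_cast hn.2
      · rw [Finset.mem_filter, Finset.mem_Ioc]
        refine ⟨⟨by omega, hn.2⟩, ?_⟩
        refine (pow_dvd_pow p ?_).trans (Nat.ordProj_dvd n p)
        apply Nat.clog_le_of_le_pow
        apply Nat.succ_le_of_lt
        rw [Nat.floor_lt hLpos.le]
        push_cast
        linarith
  have h1 : Nat.card {n : ℕ | n ∈ Finset.Icc 3 x ∧ ∃ p : ℕ, p.Prime ∧
          (p : ℝ) ≤ Real.log (Real.log n) ∧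
          Real.log n < (p : ℝ) ^ (n.factorization p)} ≤ T.card := by
    have := Set.ncard_le_ncard hsub T.finite_toSet
    rwa [Set.ncard_coe_finset] at this
  have h2 : T.card ≤ Nat.sqrt x + ∑ p ∈ (Finset.Ioc 0 M).filter Nat.Prime, x / p ^ k p := by
    refine (Finset.card_union_le _ _).trans ?_
    refine add_le_add (by simp) ?_
    refine Finset.card_biUnion_le.trans (le_of_eq ?_)
    refine Finset.sum_congr rfl fun p _ => ?_
    exact Nat.Ioc_filter_dvd_card_eq_div x _
  have h3 : ((∑ p ∈ (Finset.Ioc 0 M).filter Nat.Prime, x / p ^ k p : ℕ) : ℝ) ≤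
      M * (x / L) := by
    push_cast
    have : ∀ p ∈ (Finset.Ioc 0 M).filter Nat.Prime, ((x / p ^ k p : ℕ) : ℝ) ≤ x / L := by
      intro p hp
      have hp := (Finset.mem_filter.mp hp).2
      refine Nat.cast_div_le.trans ?_
      apply div_le_div_of_nonneg_left (by positivity) hLpos
      have h4 : ⌊L⌋₊ + 1 ≤ p ^ k p := Nat.le_pow_clog hp.one_lt _
      have h5 : ((⌊L⌋₊ + 1 : ℕ) : ℝ) ≤ ((p ^ k p : ℕ) : ℝ) := by exact_mod_cast h4
      have h6 := Nat.lt_floor_add_one L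
      push_cast at h5 ⊢
      linarith
    refine (Finset.sum_le_card_nsmul _ _ _ this).trans ?_
    rw [nsmul_eq_mul]
    have h7 : ((Finset.Ioc 0 M).filter Nat.Prime).card ≤ M := by
      refine (Finset.card_filter_le _ _).trans (by simp)
    gcongr
  have h8 : (M : ℝ) ≤ Real.log (Real.log x) := Nat.floor_le hll
  have h9 : (Nat.sqrt x : ℝ) ≤ Real.sqrt x := Real.nat_sqrt_le_real_sqrt
  have h10 : (T.card : ℝ) ≤ (Nat.sqrt x : ℝ) +
      ((∑ p ∈ (Finset.Ioc 0 M).filter Nat.Prime, x / p ^ k p : ℕ) : ℝ) := by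
    exact_mod_cast h2
  have h11 : (M : ℝ) * (x / L) ≤ Real.log (Real.log x) * (x / L) := by gcongr
  have h12 := (Nat.cast_le (α := ℝ)).mpr h1
  linarith

/-- Let `N x` be the number of integers `n` with `3 ≤ n ≤ x` for which some prime
`p ≤ log log n` satisfies `p ^ (v_p n) > log n` (where `v_p n` is the `p`-adic valuation).
Then `N x / x → 0` as `x → ∞`: for almost all `n`, every prime `p ≤ log log n`
dividing `n` satisfies `p ^ (v_p n) ≤ log n`. -/
theorem count_large_smallPrimePower_tendsto_zero :
    Filter.Tendsto (fun x : ℕ =>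
      (Nat.card {n : ℕ | n ∈ Finset.Icc 3 x ∧ ∃ p : ℕ, p.Prime ∧
          (p : ℝ) ≤ Real.log (Real.log n) ∧
          Real.log n < (p : ℝ) ^ (n.factorization p)} : ℝ) / x)
      Filter.atTop (nhds 0) := by
  have hc : Filter.Tendsto (fun x : ℕ => (x : ℝ)) Filter.atTop Filter.atTop :=
    tendsto_natCast_atTop_atTop
  have hA : Filter.Tendsto (fun x : ℕ => (Real.sqrt x)⁻¹) Filter.atTop (nhds 0) :=
    (Real.tendsto_sqrt_atTop.comp hc).inv_tendsto_atTop
  have hB : Filter.Tendsto (fun x : ℕ => Real.log (Real.log x) / Real.log x)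
      Filter.atTop (nhds 0) :=
    (Real.isLittleO_log_id_atTop.tendsto_div_nhds_zero).comp (Real.tendsto_log_atTop.comp hc)
  have hAB := hA.add (hB.const_mul 2)
  rw [mul_zero, add_zero] at hAB
  refine tendsto_of_tendsto_of_tendsto_of_le_of_le' tendsto_const_nhds hAB ?_ ?_
  · exact Filter.Eventually.of_forall fun x => by positivity
  · filter_upwards [Filter.eventually_ge_atTop 3] with x hx
    have hxpos : (0 : ℝ) < x := by
      have : 0 < x := by omega
      exact_mod_cast this
    rw [div_le_iff₀ hxpos]
    refine (count_bound_aux x hx).trans (le_of_eq ?_)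
    have hs : 0 < Real.sqrt x := Real.sqrt_pos.mpr hxpos
    have h1 : (Real.sqrt x)⁻¹ * x = Real.sqrt x := by
      rw [inv_mul_eq_div, Real.div_sqrt]
    rw [add_mul, h1, div_div_eq_mul_div]
    ring
end

section
/- The set of positive integers n that are both (2, log log n)-free and (log log n)-separable has natural density 1. -/
/-- A positive integer `n` is `(2,c)`-free if every prime `p` with `p² ∣ n` satisfies `p ≤ c`. -/
def TwoCFree (c : ℝ) (n : ℕ) : Prop :=
  ∀ p : ℕ, p.Prime → p ^ 2 ∣ n → (p : ℝ) ≤ c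

/-- A positive integer `n` is `c`-separable if for every prime `p > c` dividing `n`,
every prime `q`, and every `k ≥ 0`: `q ^ k ∣ n` and `q ^ k ≡ 1 (mod p)` imply `k = 0`. -/
def CSeparable (c : ℝ) (n : ℕ) : Prop :=
  ∀ p : ℕ, p.Prime → c < (p : ℝ) → p ∣ n →
    ∀ q : ℕ, q.Prime → ∀ k : ℕ, q ^ k ∣ n → q ^ k ≡ 1 [MOD p] → k = 0

section Helpers
open Finset

namespace TFS

noncomputable def gcdAF (a : ℕ) : ArithmeticFunction ℝ :=
  ⟨fun b => if b = 0 then 0 else (Nat.gcd a b : ℝ), by simp⟩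

lemma gcdAF_apply (a b : ℕ) (hb : b ≠ 0) : gcdAF a b = (Nat.gcd a b : ℝ) := by
  simp [gcdAF, hb]

lemma gcdAF_mult (a : ℕ) : (gcdAF a).IsMultiplicative := by
  rw [ArithmeticFunction.IsMultiplicative.iff_ne_zero]
  constructor
  · simp [gcdAF]
  · intro m n hm hn h
    rw [gcdAF_apply _ _ hm, gcdAF_apply _ _ hn, gcdAF_apply _ _ (mul_ne_zero hm hn),
      Nat.Coprime.gcd_mul a h]
    push_cast; rfl

lemma moeb_gcd_sum (a e : ℕ) (he : Squarefree e) :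
    ∑ b ∈ e.divisors, (ArithmeticFunction.moebius b : ℝ) * (Nat.gcd a b : ℝ)
      = ∏ l ∈ e.primeFactors, (1 - (Nat.gcd a l : ℝ)) := by
  have h := (gcdAF_mult a).prodPrimeFactors_one_sub_of_squarefree _ he
  have h1 : ∀ l ∈ e.primeFactors, (1 - gcdAF a l) = (1 - (Nat.gcd a l : ℝ)) := by
    intro l hl
    rw [gcdAF_apply _ _ (Nat.prime_of_mem_primeFactors hl).ne_zero]
  rw [← Finset.prod_congr rfl h1, h]
  refine Finset.sum_congr rfl fun b hb => ?_
  rw [gcdAF_apply _ _ (Nat.pos_of_mem_divisors hb).ne']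

lemma inner_zero (a e : ℕ) (he : Squarefree e) (h : ¬ e ∣ a) :
    ∑ b ∈ e.divisors, (ArithmeticFunction.moebius b : ℝ) * (Nat.gcd a b : ℝ) = 0 := by
  rw [moeb_gcd_sum a e he]
  by_contra hne
  apply h
  replace hne := Finset.prod_ne_zero_iff.1 hne
  rw [← Nat.prod_primeFactors_of_squarefree he]
  apply Finset.prod_primes_dvd
  · intro l hl; exact (Nat.prime_of_mem_primeFactors hl).prime
  · intro l hl
    by_contra hla
    apply hne l hl
    have : Nat.gcd a l = 1 := by
      have := (Nat.Prime.coprime_iff_not_dvd (Nat.prime_of_mem_primeFactors hl)).2 hla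
      exact this.symm
    simp [this]

lemma inner_abs (a : ℕ) (ha : Squarefree a) :
    |∑ b ∈ a.divisors, (ArithmeticFunction.moebius b : ℝ) * (Nat.gcd a b : ℝ)| ≤ a := by
  rw [moeb_gcd_sum a a ha, Finset.abs_prod]
  calc ∏ l ∈ a.primeFactors, |1 - (Nat.gcd a l : ℝ)| ≤ ∏ l ∈ a.primeFactors, (l : ℝ) := by
        refine Finset.prod_le_prod (fun _ _ => abs_nonneg _) fun l hl => ?_
        rw [Nat.gcd_eq_right (Nat.dvd_of_mem_primeFactors hl)]
        have : (1 : ℝ) ≤ l := by exact_mod_cast (Nat.prime_of_mem_primeFactors hl).one_lt.le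
        rw [abs_le]; constructor <;> linarith
    _ = a := by
        rw [← Nat.cast_prod, Nat.prod_primeFactors_of_squarefree ha]

noncomputable def Q (d e : ℕ) : ℝ := ∑ a ∈ d.divisors, ∑ b ∈ e.divisors,
  (ArithmeticFunction.moebius a : ℝ) * (ArithmeticFunction.moebius b : ℝ) * (Nat.gcd a b : ℝ)

lemma Q_symm (d e : ℕ) : Q d e = Q e d := by
  unfold Q
  rw [Finset.sum_comm]
  refine Finset.sum_congr rfl fun a _ => Finset.sum_congr rfl fun b _ => ?_
  rw [Nat.gcd_comm]; ring

lemma Q_zero (d e : ℕ) (he : Squarefree e) (h : ¬ e ∣ d) : Q d e = 0 := by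
  unfold Q
  refine Finset.sum_eq_zero fun a ha => ?_
  have := inner_zero a e he (fun h1 => h (h1.trans (Nat.dvd_of_mem_divisors ha)))
  simp_rw [mul_assoc, ← Finset.mul_sum, this, mul_zero]

lemma Q_ne (d e : ℕ) (hd : Squarefree d) (he : Squarefree e) (h : d ≠ e) : Q d e = 0 := by
  by_cases h1 : e ∣ d
  · rw [Q_symm]
    exact Q_zero e d hd (fun h2 => h (Nat.dvd_antisymm h2 h1))
  · exact Q_zero d e he h1

lemma Q_self (d : ℕ) (hd : Squarefree d) : Q d d ≤ d := by
  have : Q d d = (ArithmeticFunction.moebius d : ℝ) *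
      ∑ b ∈ d.divisors, (ArithmeticFunction.moebius b : ℝ) * (Nat.gcd d b : ℝ) := by
    unfold Q
    simp_rw [mul_assoc, ← Finset.mul_sum]
    refine Finset.sum_eq_single d ?_ ?_
    · intro a ha hne
      have hh : ¬ d ∣ a := fun h => hne (Nat.dvd_antisymm (Nat.dvd_of_mem_divisors ha) h)
      rw [inner_zero a d hd hh, mul_zero]
    · intro h; exact absurd (Nat.mem_divisors_self d hd.ne_zero) h
  rw [this]
  refine (le_abs_self _).trans ?_
  rw [abs_mul]
  have h1 : |(ArithmeticFunction.moebius d : ℝ)| ≤ 1 := by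
    exact_mod_cast ArithmeticFunction.abs_moebius_le_one
  calc _ ≤ 1 * (d : ℝ) := mul_le_mul h1 (inner_abs d hd) (abs_nonneg _) zero_le_one
    _ = d := one_mul _

lemma count_lem (p m X : ℕ) (hp : 0 < p) (hm : 0 < m) (hc : Nat.Coprime p m) :
    |(((Finset.Ico X (2 * X)).filter (fun n => n ≡ 1 [MOD p] ∧ m ∣ n)).card : ℝ)
      - X / (p * m)| ≤ 1 := by
  obtain ⟨v, hv1, hv2⟩ := Nat.chineseRemainder hc 1 0
  have heq : (Finset.Ico X (2 * X)).filter (fun n => n ≡ 1 [MOD p] ∧ m ∣ n)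
      = (Finset.Ico X (2 * X)).filter (fun n => n ≡ v [MOD (p * m)]) := by
    refine Finset.filter_congr fun n _ => ?_
    rw [← Nat.modEq_and_modEq_iff_modEq_mul hc]
    constructor
    · rintro ⟨h1, h2⟩
      exact ⟨h1.trans hv1.symm, ((Nat.modEq_zero_iff_dvd.2 h2)).trans hv2.symm⟩
    · rintro ⟨h1, h2⟩
      exact ⟨h1.trans hv1, Nat.modEq_zero_iff_dvd.1 (h2.trans hv2)⟩
  rw [heq]
  have hr : 0 < p * m := Nat.mul_pos hp hm
  have h := Nat.Ico_filter_modEq_card X (2 * X) hr v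
  have hr' : (0 : ℚ) < ((p * m : ℕ) : ℚ) := by exact_mod_cast hr
  have hle : ((X : ℚ) - v) / ((p * m : ℕ) : ℚ) ≤ (((2 * X : ℕ) : ℚ) - v) / ((p * m : ℕ) : ℚ) := by
    gcongr; push_cast; have : (0 : ℚ) ≤ X := by positivity
    linarith
  have hle2 := Int.ceil_le_ceil hle
  rw [max_eq_left (by linarith)] at h
  have hQ : (((Finset.Ico X (2 * X)).filter (fun n => n ≡ v [MOD (p * m)])).card : ℚ)
      = (⌈(((2 * X : ℕ) : ℚ) - v) / ((p * m : ℕ) : ℚ)⌉ : ℚ)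
        - (⌈((X : ℚ) - v) / ((p * m : ℕ) : ℚ)⌉ : ℚ) := by exact_mod_cast h
  have hd : (((2 * X : ℕ) : ℚ) - v) / ((p * m : ℕ) : ℚ) = ((X : ℚ) - v) / ((p * m : ℕ) : ℚ)
      + X / (p * m) := by
    push_cast
    rw [← add_div]; ring
  have a1 := Int.le_ceil ((((2 * X : ℕ) : ℚ) - v) / ((p * m : ℕ) : ℚ))
  have a2 := Int.ceil_lt_add_one ((((2 * X : ℕ) : ℚ) - v) / ((p * m : ℕ) : ℚ))
  have a3 := Int.le_ceil (((X : ℚ) - v) / ((p * m : ℕ) : ℚ))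
  have a4 := Int.ceil_lt_add_one (((X : ℚ) - v) / ((p * m : ℕ) : ℚ))
  have : |(((Finset.Ico X (2 * X)).filter (fun n => n ≡ v [MOD (p * m)])).card : ℚ)
      - X / (p * m)| ≤ 1 := by
    rw [abs_le, hQ]; constructor <;> linarith
  have h' := (Rat.cast_le (K := ℝ)).2 this
  push_cast at h' ⊢
  exact h'

noncomputable def DD (p z : ℕ) : Finset ℕ :=
  (Finset.Icc 1 z).filter (fun d => Squarefree d ∧ Nat.Coprime p d)

noncomputable def GG (p z : ℕ) : ℝ := ∑ d ∈ DD p z, (1 : ℝ) / d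

lemma sum_inv_sq (z : ℕ) : ∑ k ∈ Finset.Icc 1 z, (1 : ℝ) / k ^ 2 ≤ 2 := by
  have h := sum_Ioo_inv_sq_le (α := ℝ) 0 (z + 1)
  have : Finset.Ioo 0 (z + 1) = Finset.Icc 1 z := by ext; simp; omega
  rw [this] at h
  simpa using h

lemma harm_le (p z : ℕ) (hp : p.Prime) :
    (∑ n ∈ Finset.Icc 1 z, (1 : ℝ) / n) ≤ 4 * GG p z := by
  have h1 : (∑ n ∈ (Finset.Icc 1 z).filter (fun n => ¬ p ∣ n), (1 : ℝ) / n) ≤ 2 * GG p z := by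
    have hinj : ∑ n ∈ (Finset.Icc 1 z).filter (fun n => ¬ p ∣ n), (1 : ℝ) / n ≤
        ∑ x ∈ (DD p z) ×ˢ (Finset.Icc 1 z), (1 : ℝ) / ((x.2 ^ 2 * x.1 : ℕ) : ℝ) := by
      calc _ ≤ ∑ n ∈ ((DD p z) ×ˢ (Finset.Icc 1 z)).image (fun x : ℕ × ℕ => x.2 ^ 2 * x.1), (1 : ℝ) / (n : ℕ) := by
            refine Finset.sum_le_sum_of_subset_of_nonneg ?_ (fun _ _ _ => by positivity)
            intro n hn
            rw [Finset.mem_filter, Finset.mem_Icc] at hn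
            obtain ⟨a, b, ha, hb, hab, hsq⟩ := Nat.sq_mul_squarefree_of_pos (n := n) (by omega)
            rw [Finset.mem_image]
            refine ⟨(a, b), ?_, hab⟩
            have hale : a ≤ n := Nat.le_of_dvd (by omega) ⟨b ^ 2, by rw [← hab]; ring⟩
            have hble : b ≤ n := Nat.le_of_dvd (by omega) ⟨b * a, by rw [← hab]; ring⟩
            simp only [Finset.mem_product, DD, Finset.mem_filter, Finset.mem_Icc]
            refine ⟨⟨⟨ha, by omega⟩, hsq, ?_⟩, hb, by omega⟩
            rw [Nat.Prime.coprime_iff_not_dvd hp]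
            intro h; exact hn.2 (hab ▸ h.mul_left _)
        _ ≤ _ := by
            apply Finset.sum_image_le_of_nonneg
            intro _ _; positivity
    refine hinj.trans ?_
    rw [Finset.sum_product]
    unfold GG
    rw [Finset.mul_sum]
    refine Finset.sum_le_sum fun d hd => ?_
    calc ∑ y ∈ Finset.Icc 1 z, (1 : ℝ) / ((y ^ 2 * d : ℕ) : ℝ)
        = (∑ y ∈ Finset.Icc 1 z, (1 : ℝ) / y ^ 2) * (1 / d) := by
          rw [Finset.sum_mul]; refine Finset.sum_congr rfl fun y _ => ?_
          push_cast; rw [one_div_mul_one_div]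
      _ ≤ 2 * (1 / d) := by
          have := sum_inv_sq z
          gcongr
  have h2 : (∑ n ∈ (Finset.Icc 1 z).filter (fun n => p ∣ n), (1 : ℝ) / n) ≤
      (1 / 2) * ∑ n ∈ Finset.Icc 1 z, (1 : ℝ) / n := by
    calc _ ≤ ∑ n ∈ (Finset.Icc 1 z).image (fun n : ℕ => p * n), (1 : ℝ) / (n : ℕ) := by
            refine Finset.sum_le_sum_of_subset_of_nonneg ?_ (fun _ _ _ => by positivity)
            intro n hn
            rw [Finset.mem_filter, Finset.mem_Icc] at hn
            obtain ⟨⟨h1, h2⟩, k, rfl⟩ := hn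
            rw [Finset.mem_image]
            have hk : k ≠ 0 := by rintro rfl; simp at h1
            exact ⟨k, by rw [Finset.mem_Icc]; exact ⟨by omega, le_trans (Nat.le_mul_of_pos_left k hp.pos) h2⟩, rfl⟩
      _ ≤ ∑ n ∈ Finset.Icc 1 z, (1 : ℝ) / ((p * n : ℕ) : ℝ) := by
            apply Finset.sum_image_le_of_nonneg
            intro _ _; positivity
      _ ≤ _ := by
          rw [Finset.mul_sum]
          refine Finset.sum_le_sum fun n hn => ?_
          push_cast
          rw [← one_div_mul_one_div]
          have : (2 : ℝ) ≤ p := by exact_mod_cast hp.two_le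
          gcongr
  have h3 := Finset.sum_filter_add_sum_filter_not (Finset.Icc 1 z) (fun n => p ∣ n) (fun n => (1 : ℝ) / n)
  linarith

lemma GG_one_le (p z : ℕ) (hz : 1 ≤ z) : 1 ≤ GG p z := by
  unfold GG
  have h1 : 1 ∈ DD p z := by simp [DD, hz]
  have := Finset.single_le_sum (f := fun d : ℕ => (1 : ℝ) / d) (fun _ _ => by positivity) h1
  simpa using this

/-- sieve weight -/
noncomputable def ff (d n : ℕ) : ℝ :=
  ∑ a ∈ d.divisors, (ArithmeticFunction.moebius a : ℝ) * a * (if a ∣ n then 1 else 0)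

lemma ff_one (d n : ℕ) (hd : d ≠ 0) (h : Nat.Coprime d n) : ff d n = 1 := by
  unfold ff
  rw [Finset.sum_eq_single 1]
  · simp
  · intro a ha hne
    rw [if_neg, mul_zero]
    intro h1
    apply hne
    exact Nat.eq_one_of_dvd_coprimes h (Nat.dvd_of_mem_divisors ha) h1
  · intro h; simp [hd] at h

lemma sum_ff (p X d e : ℕ) (hp : 0 < p) (hd : d ≠ 0) (he : e ≠ 0)
    (hdp : Nat.Coprime p d) (hep : Nat.Coprime p e) :
    ∑ n ∈ (Finset.Ico X (2 * X)).filter (fun n => n ≡ 1 [MOD p]), ff d n * ff e n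
      ≤ X / p * Q d e + (d : ℝ) ^ 2 * e ^ 2 := by
  have h1 : ∑ n ∈ (Finset.Ico X (2 * X)).filter (fun n => n ≡ 1 [MOD p]), ff d n * ff e n
      = ∑ a ∈ d.divisors, ∑ b ∈ e.divisors, ((ArithmeticFunction.moebius a : ℝ) * a) *
        ((ArithmeticFunction.moebius b : ℝ) * b) *
        (((Finset.Ico X (2 * X)).filter (fun n => n ≡ 1 [MOD p] ∧ Nat.lcm a b ∣ n)).card : ℝ) := by
    simp_rw [ff, Finset.sum_mul_sum]
    rw [Finset.sum_comm]
    refine Finset.sum_congr rfl fun a _ => ?_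
    rw [Finset.sum_comm]
    refine Finset.sum_congr rfl fun b _ => ?_
    rw [← Finset.filter_filter, Finset.card_filter]
    push_cast
    rw [Finset.mul_sum]
    refine Finset.sum_congr rfl fun n _ => ?_
    simp only [Nat.lcm_dvd_iff]
    by_cases ha : a ∣ n <;> by_cases hb : b ∣ n <;> simp [ha, hb]
  rw [h1]
  unfold Q
  have hcard : ∀ m : ℕ, m ≠ 0 → ∑ a ∈ m.divisors, (a : ℝ) ≤ (m : ℝ) ^ 2 := by
    intro m hm
    calc ∑ a ∈ m.divisors, (a : ℝ) ≤ ∑ a ∈ m.divisors, (m : ℝ) := by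
          refine Finset.sum_le_sum fun a ha => ?_
          exact_mod_cast Nat.divisor_le ha
      _ = (m.divisors.card : ℝ) * m := by simp
      _ ≤ (m : ℝ) * m := by
          have := Nat.card_divisors_le_self m
          gcongr
      _ = _ := by ring
  have h2 : ∑ a ∈ d.divisors, ∑ b ∈ e.divisors, (a : ℝ) * b ≤ (d : ℝ) ^ 2 * e ^ 2 := by
    rw [← Finset.sum_mul_sum]
    exact mul_le_mul (hcard d hd) (hcard e he) (Finset.sum_nonneg fun _ _ => by positivity) (by positivity)
  refine le_trans ?_ (add_le_add_right h2 _)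
  rw [Finset.mul_sum, ← Finset.sum_add_distrib]
  refine Finset.sum_le_sum fun a ha => ?_
  rw [Finset.mul_sum, ← Finset.sum_add_distrib]
  refine Finset.sum_le_sum fun b hb => ?_
  have ha0 := Nat.pos_of_mem_divisors ha
  have hb0 := Nat.pos_of_mem_divisors hb
  have hc : Nat.Coprime p (Nat.lcm a b) := by
    have : Nat.Coprime p (a * b) := Nat.Coprime.mul_right
      (hdp.coprime_dvd_right (Nat.dvd_of_mem_divisors ha))
      (hep.coprime_dvd_right (Nat.dvd_of_mem_divisors hb))
    exact this.coprime_dvd_right (Nat.lcm_dvd_mul a b)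
  have hcl := count_lem p (Nat.lcm a b) X hp (Nat.lcm_pos ha0 hb0) hc
  set c : ℝ := (((Finset.Ico X (2 * X)).filter (fun n => n ≡ 1 [MOD p] ∧ Nat.lcm a b ∣ n)).card : ℝ)
  set w : ℝ := ((ArithmeticFunction.moebius a : ℝ) * a) * ((ArithmeticFunction.moebius b : ℝ) * b) with hw
  have hwabs : |w| ≤ a * b := by
    have h1 : |(ArithmeticFunction.moebius a : ℝ)| ≤ 1 := by
      exact_mod_cast ArithmeticFunction.abs_moebius_le_one
    have h2 : |(ArithmeticFunction.moebius b : ℝ)| ≤ 1 := by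
      exact_mod_cast ArithmeticFunction.abs_moebius_le_one
    rw [hw, abs_mul, abs_mul, abs_mul, Nat.abs_cast, Nat.abs_cast]
    have e1 : |(ArithmeticFunction.moebius a : ℝ)| * a ≤ a := by
      have : (0:ℝ) ≤ a := by positivity
      nlinarith
    have e2 : |(ArithmeticFunction.moebius b : ℝ)| * b ≤ b := by
      have : (0:ℝ) ≤ b := by positivity
      nlinarith
    exact mul_le_mul e1 e2 (by positivity) (by positivity)
  have hmain : w * (X / (p * (Nat.lcm a b : ℕ))) = X / p * ((ArithmeticFunction.moebius a : ℝ) *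
      (ArithmeticFunction.moebius b : ℝ) * (Nat.gcd a b : ℝ)) := by
    have hg : (Nat.gcd a b : ℝ) * (Nat.lcm a b : ℕ) = a * b := by exact_mod_cast Nat.gcd_mul_lcm a b
    have hl0 : ((Nat.lcm a b : ℕ) : ℝ) ≠ 0 := by exact_mod_cast (Nat.lcm_pos ha0 hb0).ne'
    have hp0 : (p : ℝ) ≠ 0 := by exact_mod_cast hp.ne'
    rw [hw]
    field_simp
    linear_combination (-(X : ℝ) * (ArithmeticFunction.moebius a : ℝ) * (ArithmeticFunction.moebius b : ℝ)) * hg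
  rw [← hmain]
  have : w * (c - X / (p * (Nat.lcm a b : ℕ))) ≤ a * b := by
    refine (le_abs_self _).trans ?_
    rw [abs_mul]
    calc _ ≤ (a * b : ℝ) * 1 := mul_le_mul hwabs hcl (abs_nonneg _) (by positivity)
      _ = _ := mul_one _
  linarith

lemma sieve (p X z : ℕ) (hp : p.Prime) (hz : 1 ≤ z) (hzX : z < X) :
    (((Finset.Ico X (2 * X)).filter (fun n => n ≡ 1 [MOD p] ∧ n.Prime)).card : ℝ) * (GG p z)
      ≤ X / p + (z : ℝ) ^ 4 := by
  set A := (Finset.Ico X (2 * X)).filter (fun n => n ≡ 1 [MOD p])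
  have hG := GG_one_le p z hz
  have h1 : (((Finset.Ico X (2 * X)).filter (fun n => n ≡ 1 [MOD p] ∧ n.Prime)).card : ℝ) * (GG p z) ^ 2
      ≤ ∑ n ∈ A, (∑ d ∈ DD p z, (1 / d : ℝ) * ff d n) ^ 2 := by
    rw [← Finset.filter_filter, ← nsmul_eq_mul, ← Finset.sum_const]
    calc _ ≤ ∑ n ∈ A.filter Nat.Prime, (∑ d ∈ DD p z, (1 / d : ℝ) * ff d n) ^ 2 := by
          refine Finset.sum_le_sum fun n hn => ?_
          apply le_of_eq
          congr 1
          unfold GG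
          refine Finset.sum_congr rfl fun d hd => ?_
          simp only [A, Finset.mem_filter, Finset.mem_Ico] at hn
          simp only [DD, Finset.mem_filter, Finset.mem_Icc] at hd
          rw [ff_one d n (by omega), mul_one]
          exact (Nat.coprime_of_lt_prime (by omega) (by omega) hn.2).symm
      _ ≤ _ := Finset.sum_le_sum_of_subset_of_nonneg (Finset.filter_subset _ _)
          (fun _ _ _ => by positivity)
  have h2 : ∑ n ∈ A, (∑ d ∈ DD p z, (1 / d : ℝ) * ff d n) ^ 2
      = ∑ d ∈ DD p z, ∑ e ∈ DD p z, (1 / d : ℝ) * (1 / e) * ∑ n ∈ A, ff d n * ff e n := by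
    simp_rw [sq, Finset.sum_mul_sum]
    rw [Finset.sum_comm]
    refine Finset.sum_congr rfl fun a _ => ?_
    rw [Finset.sum_comm]
    refine Finset.sum_congr rfl fun b _ => ?_
    rw [Finset.mul_sum]
    refine Finset.sum_congr rfl fun n _ => ?_
    ring
  have h3 : ∑ d ∈ DD p z, ∑ e ∈ DD p z, (1 / d : ℝ) * (1 / e) * ∑ n ∈ A, ff d n * ff e n
      ≤ ∑ d ∈ DD p z, ∑ e ∈ DD p z, ((if d = e then X / p * (1 / d : ℝ) else 0) + (d : ℝ) * e) := by
    refine Finset.sum_le_sum fun d hd => Finset.sum_le_sum fun e he => ?_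
    simp only [DD, Finset.mem_filter, Finset.mem_Icc] at hd he
    have hd0 : (0 : ℝ) < d := by exact_mod_cast (by omega : 0 < d)
    have he0 : (0 : ℝ) < e := by exact_mod_cast (by omega : 0 < e)
    have hs := sum_ff p X d e hp.pos (by omega) (by omega) hd.2.2 he.2.2
    calc _ ≤ (1 / d : ℝ) * (1 / e) * (X / p * Q d e + (d : ℝ) ^ 2 * e ^ 2) := by gcongr
      _ = X / p * ((1 / d : ℝ) * (1 / e) * Q d e) + d * e := by field_simp
      _ ≤ _ := by
        gcongr
        split_ifs with hde
        · subst hde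
          have := Q_self d hd.2.1
          gcongr
          calc (1 / d : ℝ) * (1 / d) * Q d d ≤ (1 / d : ℝ) * (1 / d) * d := by gcongr
            _ = 1 / d := by field_simp
        · rw [Q_ne d e hd.2.1 he.2.1 hde]; simp
  have h4 : ∑ d ∈ DD p z, ∑ e ∈ DD p z, ((if d = e then X / p * (1 / d : ℝ) else 0) + (d : ℝ) * e)
      ≤ X / p * GG p z + (z : ℝ) ^ 4 := by
    simp_rw [Finset.sum_add_distrib]
    rw [← Finset.sum_mul_sum]
    have hs : ∑ d ∈ DD p z, (d : ℝ) ≤ (z : ℝ) ^ 2 := by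
      calc ∑ d ∈ DD p z, (d : ℝ) ≤ ∑ d ∈ Finset.Icc 1 z, (d : ℝ) :=
            Finset.sum_le_sum_of_subset_of_nonneg (Finset.filter_subset _ _) (fun _ _ _ => by positivity)
        _ ≤ ∑ d ∈ Finset.Icc 1 z, (z : ℝ) := by
            refine Finset.sum_le_sum fun d hd => ?_
            exact_mod_cast (Finset.mem_Icc.1 hd).2
        _ = _ := by simp [sq]
    have hs0 : 0 ≤ ∑ d ∈ DD p z, (d : ℝ) := Finset.sum_nonneg fun _ _ => by positivity
    apply add_le_add
    · apply le_of_eq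
      unfold GG
      rw [Finset.mul_sum]
      refine Finset.sum_congr rfl fun d hd => ?_
      rw [Finset.sum_ite_eq, if_pos hd]
    · nlinarith
  have h5 := (h1.trans h2.le).trans (h3.trans h4)
  set c : ℝ := (((Finset.Ico X (2 * X)).filter (fun n => n ≡ 1 [MOD p] ∧ n.Prime)).card : ℝ)
  have hz4 : (z : ℝ) ^ 4 ≤ (z : ℝ) ^ 4 * GG p z := le_mul_of_one_le_right (by positivity) hG
  have : (c * GG p z) * GG p z ≤ (X / p + (z : ℝ) ^ 4) * GG p z := by nlinarith
  exact le_of_mul_le_mul_right this (by linarith)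

end TFS

namespace TFS

lemma GG_lower (p i : ℕ) (hp : p.Prime) : (i : ℝ) / 256 ≤ GG p (2 ^ (i / 16)) := by
  set j := i / 16 with hj
  have h1 := harm_le p (2 ^ j) hp
  have h2 : Real.log ((2 ^ j + 1 : ℕ) : ℝ) ≤ ∑ n ∈ Finset.Icc (1 : ℕ) (2 ^ j), (1 : ℝ) / (n : ℕ) := by
    have := log_add_one_le_harmonic (2 ^ j)
    rw [harmonic_eq_sum_Icc] at this
    push_cast at this ⊢
    simpa [one_div] using this
  have h3 : (j : ℝ) * Real.log 2 ≤ Real.log ((2 ^ j + 1 : ℕ) : ℝ) := by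
    rw [← Real.log_pow]
    apply Real.log_le_log (by positivity)
    push_cast; linarith
  have h4 := Real.log_two_gt_d9
  have hi : (i : ℝ) ≤ 16 * j + 15 := by
    have : i ≤ 16 * j + 15 := by omega
    exact_mod_cast this
  rcases Nat.eq_zero_or_pos j with h0 | h0
  · have := GG_one_le p (2 ^ j) Nat.one_le_two_pow
    have hj0 : (j : ℝ) = 0 := by simp [h0]
    linarith
  · have h5 : (1 : ℝ) ≤ j := by exact_mod_cast h0
    nlinarith

lemma block_big (p i : ℕ) (hp : p.Prime) (h : p ^ 2 ≤ 2 ^ i) :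
    (((Finset.Ico (2 ^ i) (2 * 2 ^ i)).filter (fun n => n ≡ 1 [MOD p] ∧ n.Prime)).card : ℝ)
      ≤ 512 * 2 ^ i / (p * i) := by
  have hi : 0 < i := by
    rcases Nat.eq_zero_or_pos i with h0 | h0
    · subst h0
      have := hp.two_le
      nlinarith
    · exact h0
  have h1 := sieve p (2 ^ i) (2 ^ (i / 16)) hp Nat.one_le_two_pow
    (Nat.pow_lt_pow_right (by norm_num) (by omega))
  have h2 := GG_lower p i hp
  have h3 : p * (2 ^ (i / 16)) ^ 4 ≤ 2 ^ i := by
    have : (p * (2 ^ (i / 16)) ^ 4) ^ 2 ≤ (2 ^ i) ^ 2 := by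
      have e : (2 ^ (i / 16)) ^ 8 ≤ 2 ^ i := by
        rw [← pow_mul]; exact Nat.pow_le_pow_right (by norm_num) (by omega)
      calc (p * (2 ^ (i / 16)) ^ 4) ^ 2 = p ^ 2 * (2 ^ (i / 16)) ^ 8 := by ring
        _ ≤ 2 ^ i * 2 ^ i := Nat.mul_le_mul h e
        _ = _ := by ring
    exact (Nat.pow_le_pow_iff_left (by norm_num)).1 this
  have hp0 : (0 : ℝ) < p := by exact_mod_cast hp.pos
  have hi0 : (0 : ℝ) < i := by exact_mod_cast hi
  have h4 : (((2 ^ (i / 16) : ℕ) : ℝ)) ^ 4 ≤ ((2 ^ i : ℕ) : ℝ) / p := by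
    rw [le_div_iff₀ hp0]
    have : ((p * (2 ^ (i / 16)) ^ 4 : ℕ) : ℝ) ≤ ((2 ^ i : ℕ) : ℝ) := by exact_mod_cast h3
    push_cast at this ⊢
    linarith
  set c : ℝ := (((Finset.Ico (2 ^ i) (2 * 2 ^ i)).filter (fun n => n ≡ 1 [MOD p] ∧ n.Prime)).card : ℝ)
  have hc : 0 ≤ c := by positivity
  have h5 : c * (i / 256) ≤ 2 * (2 ^ i / p) := by
    have := mul_le_mul_of_nonneg_left h2 hc
    push_cast at h1 h4
    linarith
  have h6 : c * i ≤ 512 * 2 ^ i / p := by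
    have : 512 * 2 ^ i / (p : ℝ) = 256 * (2 * (2 ^ i / p)) := by ring
    rw [this]; linarith
  rw [← div_div, le_div_iff₀ hi0]
  exact h6

lemma block_small (p i : ℕ) (hp : p.Prime) :
    (((Finset.Ico (2 ^ i) (2 * 2 ^ i)).filter (fun n => n ≡ 1 [MOD p] ∧ n.Prime)).card : ℝ)
      ≤ 3 * 2 ^ i / p := by
  have hp0 : (0 : ℝ) < p := by exact_mod_cast hp.pos
  by_cases h : 2 * 2 ^ i ≤ p
  · have : (Finset.Ico (2 ^ i) (2 * 2 ^ i)).filter (fun n => n ≡ 1 [MOD p] ∧ n.Prime) = ∅ := by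
      rw [Finset.filter_eq_empty_iff]
      rintro n hn ⟨h1, h2⟩
      rw [Finset.mem_Ico] at hn
      have := Nat.ModEq.eq_of_lt_of_lt h1 (by omega) hp.one_lt
      exact h2.one_lt.ne' this
    rw [this]; simp; positivity
  · push Not at h
    have h1 := count_lem p 1 (2 ^ i) hp.pos one_pos (Nat.coprime_one_right p)
    have h2 : (((Finset.Ico (2 ^ i) (2 * 2 ^ i)).filter (fun n => n ≡ 1 [MOD p] ∧ n.Prime)).card : ℝ)
        ≤ (((Finset.Ico (2 ^ i) (2 * 2 ^ i)).filter (fun n => n ≡ 1 [MOD p] ∧ 1 ∣ n)).card : ℝ) := by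
      exact_mod_cast Finset.card_le_card (by
        intro n hn
        simp only [Finset.mem_filter] at hn ⊢
        exact ⟨hn.1, hn.2.1, one_dvd _⟩)
    have h3 := (abs_le.1 h1).2
    have h4 : (p : ℝ) < 2 * 2 ^ i := by exact_mod_cast h
    have h5 : (1 : ℝ) ≤ 2 * (2 ^ i / p) := by
      rw [← mul_div_assoc, le_div_iff₀ hp0]; linarith
    push_cast at h3
    rw [mul_one] at h3
    have : 3 * 2 ^ i / (p : ℝ) = 2 ^ i / p + 2 * (2 ^ i / p) := by ring
    rw [this]; linarith

noncomputable def BB (p i : ℕ) : ℝ :=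
  ∑ q ∈ (Finset.Ico (2 ^ i) (2 * 2 ^ i)).filter (fun n => n ≡ 1 [MOD p] ∧ n.Prime), (1 : ℝ) / q

lemma BB_le (p i : ℕ) : BB p i ≤
    (((Finset.Ico (2 ^ i) (2 * 2 ^ i)).filter (fun n => n ≡ 1 [MOD p] ∧ n.Prime)).card : ℝ) / 2 ^ i := by
  unfold BB
  rw [div_eq_mul_one_div, ← nsmul_eq_mul, ← Finset.sum_const]
  refine Finset.sum_le_sum fun q hq => ?_
  simp only [Finset.mem_filter, Finset.mem_Ico] at hq
  have : (2 ^ i : ℝ) ≤ q := by exact_mod_cast hq.1.1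
  gcongr

lemma BB_bound (p i : ℕ) (hp : p.Prime) :
    BB p i ≤ 512 / p * (1 / i) + (if 2 ^ i < p ^ 2 then (3 / p : ℝ) else 0) := by
  refine (BB_le p i).trans ?_
  rw [div_le_iff₀ (by positivity)]
  split_ifs with h
  · refine (block_small p i hp).trans ?_
    rw [add_mul]
    have : (0 : ℝ) ≤ 512 / p * (1 / i) * 2 ^ i := by positivity
    have e : 3 * 2 ^ i / (p : ℝ) = 3 / p * 2 ^ i := by ring
    linarith
  · refine (block_big p i hp (by omega)).trans ?_
    apply le_of_eq
    rw [add_zero, div_mul_div_comm]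
    ring

lemma T_bound (p N : ℕ) (hp : p.Prime) (hN : 1 ≤ Real.log N) :
    ∑ q ∈ (Finset.Icc 1 N).filter (fun n => n ≡ 1 [MOD p] ∧ n.Prime), (1 : ℝ) / q
      ≤ 1100 * (Real.log (Real.log N) + 1 + Real.log p) / p := by
  have hN2 : 2 ≤ N := by
    by_contra h
    have : N = 0 ∨ N = 1 := by omega
    rcases this with rfl | rfl <;> simp at hN <;> linarith
  set K := Nat.log 2 N with hK
  have hK1 : 1 ≤ K := Nat.log_pos (by norm_num) hN2
  have hp0 : (0 : ℝ) < p := by exact_mod_cast hp.pos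
  have l2 := Real.log_two_gt_d9
  have l2' := Real.log_two_lt_d9
  have h1 : ∑ q ∈ (Finset.Icc 1 N).filter (fun n => n ≡ 1 [MOD p] ∧ n.Prime), (1 : ℝ) / q
      ≤ ∑ i ∈ Finset.range (K + 1), BB p i := by
    unfold BB
    rw [← Finset.sum_biUnion]
    · refine Finset.sum_le_sum_of_subset_of_nonneg ?_ (fun _ _ _ => by positivity)
      intro q hq
      simp only [Finset.mem_filter, Finset.mem_Icc] at hq
      simp only [Finset.mem_biUnion, Finset.mem_range, Finset.mem_filter, Finset.mem_Ico]
      refine ⟨Nat.log 2 q, ?_, ⟨Nat.pow_log_le_self 2 (by omega), ?_⟩, hq.2⟩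
      · exact Nat.lt_succ_of_le (Nat.log_mono_right hq.1.2)
      · have := Nat.lt_pow_succ_log_self (b := 2) (by norm_num) q
        rw [pow_succ] at this; omega
    · intro i _ j _ hij
      simp only [Function.onFun]
      rw [Finset.disjoint_left]
      intro q hq hq'
      simp only [Finset.mem_filter, Finset.mem_Ico] at hq hq'
      apply hij
      have e1 : Nat.log 2 q = i := Nat.log_eq_of_pow_le_of_lt_pow hq.1.1 (by rw [pow_succ]; omega)
      have e2 : Nat.log 2 q = j := Nat.log_eq_of_pow_le_of_lt_pow hq'.1.1 (by rw [pow_succ]; omega)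
      omega
  have h2 : ∑ i ∈ Finset.range (K + 1), BB p i ≤
      512 / p * ∑ i ∈ Finset.range (K + 1), (1 / i : ℝ)
       + ∑ i ∈ Finset.range (K + 1), (if 2 ^ i < p ^ 2 then (3 / p : ℝ) else 0) := by
    rw [Finset.mul_sum, ← Finset.sum_add_distrib]
    exact Finset.sum_le_sum fun i _ => BB_bound p i hp
  have h3 : ∑ i ∈ Finset.range (K + 1), (1 / i : ℝ) ≤ 1 + Real.log K := by
    have := harmonic_le_one_add_log K
    rw [harmonic] at this
    rw [Finset.sum_range_succ']
    push_cast at this ⊢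
    simpa [one_div] using this
  have natlog : ∀ m : ℕ, 0 < m → (Nat.log 2 m : ℝ) ≤ 2 * Real.log m := by
    intro m hm
    have : (Nat.log 2 m : ℝ) * Real.log 2 ≤ Real.log m := by
      rw [← Real.log_pow]
      apply Real.log_le_log (by positivity)
      exact_mod_cast Nat.pow_log_le_self 2 hm.ne'
    have hn : (0 : ℝ) ≤ Nat.log 2 m := by positivity
    nlinarith
  have h4 : Real.log K ≤ 1 + Real.log (Real.log N) := by
    have := natlog N (by omega)
    calc Real.log K ≤ Real.log (2 * Real.log N) :=
          Real.log_le_log (by exact_mod_cast hK1) this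
      _ = Real.log 2 + Real.log (Real.log N) := Real.log_mul (by norm_num) (by linarith)
      _ ≤ _ := by linarith
  have h5 : ∑ i ∈ Finset.range (K + 1), (if 2 ^ i < p ^ 2 then (3 / p : ℝ) else 0)
      ≤ (4 * Real.log p + 1) * (3 / p) := by
    rw [← Finset.sum_filter, Finset.sum_const, nsmul_eq_mul]
    gcongr
    have hc : ((Finset.range (K + 1)).filter (fun i => 2 ^ i < p ^ 2)).card ≤ Nat.log 2 (p ^ 2) + 1 := by
      rw [← Finset.card_range (Nat.log 2 (p ^ 2) + 1)]
      apply Finset.card_le_card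
      intro i hi
      simp only [Finset.mem_filter, Finset.mem_range] at hi ⊢
      exact Nat.lt_succ_of_le (Nat.le_log_of_pow_le (by norm_num) hi.2.le)
    have := natlog (p ^ 2) (pow_pos hp.pos 2)
    push_cast at this
    rw [Real.log_pow] at this
    have hc' : (((Finset.range (K + 1)).filter (fun i => 2 ^ i < p ^ 2)).card : ℝ) ≤ Nat.log 2 (p ^ 2) + 1 := by
      exact_mod_cast hc
    push_cast at this
    linarith
  have hlp : 0 ≤ Real.log p := Real.log_nonneg (by exact_mod_cast hp.one_lt.le)
  have hL : 0 ≤ Real.log (Real.log N) := Real.log_nonneg hN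
  refine h1.trans (h2.trans ?_)
  calc _ ≤ 512 / p * (2 + Real.log (Real.log N)) + (4 * Real.log p + 1) * (3 / p) := by
        gcongr
        linarith
    _ = (512 * (2 + Real.log (Real.log N)) + 3 * (4 * Real.log p + 1)) / p := by ring
    _ ≤ _ := by
        gcongr
        linarith

lemma theta_succ (M : ℕ) : Chebyshev.theta ((M + 1 : ℕ) : ℝ) = Chebyshev.theta (M : ℝ) +
    (if (M + 1).Prime then Real.log ((M + 1 : ℕ) : ℝ) else 0) := by
  unfold Chebyshev.theta
  rw [Nat.floor_natCast, Nat.floor_natCast, Finset.sum_filter, Finset.sum_filter,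
    Finset.sum_Ioc_succ_top (by omega)]

lemma prime_tail (Y M : ℕ) (hY : 1 ≤ Y) (hM : Y ≤ M) :
    ∑ p ∈ (Finset.Ioc Y M).filter Nat.Prime, Real.log p / (p : ℝ) ^ 2 ≤ 2 * Real.log 4 / Y := by
  have hl4 : 0 ≤ Real.log 4 := Real.log_nonneg (by norm_num)
  have key : ∑ p ∈ (Finset.Ioc Y M).filter Nat.Prime, Real.log p / (p : ℝ) ^ 2 ≤
      Chebyshev.theta M / (M : ℝ) ^ 2 + 2 * Real.log 4 * (1 / Y - 1 / M) := by
    induction M, hM using Nat.le_induction with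
    | base => simp; have := Chebyshev.theta_nonneg (Y : ℝ); positivity
    | succ M hM ih =>
      rw [Finset.sum_filter, Finset.sum_Ioc_succ_top (by omega), ← Finset.sum_filter, theta_succ]
      have hM0 : (0 : ℝ) < M := by exact_mod_cast (by omega : 0 < M)
      have hth := Chebyshev.theta_le_log4_mul_x hM0.le
      have e1 : Chebyshev.theta (M : ℝ) * (1 / (M : ℝ) ^ 2 - 1 / ((M : ℝ) + 1) ^ 2) ≤
          2 * Real.log 4 * (1 / M - 1 / ((M : ℝ) + 1)) := by
        have e0 : 0 ≤ (1 / (M : ℝ) ^ 2 - 1 / ((M : ℝ) + 1) ^ 2) := by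
          rw [sub_nonneg]; gcongr; linarith
        refine (mul_le_mul_of_nonneg_right hth e0).trans ?_
        have : (M : ℝ) * (1 / (M : ℝ) ^ 2 - 1 / ((M : ℝ) + 1) ^ 2) ≤ 2 * (1 / M - 1 / ((M : ℝ) + 1)) := by
          rw [← sub_nonneg]
          have : 2 * (1 / M - 1 / ((M : ℝ) + 1)) - (M : ℝ) * (1 / (M : ℝ) ^ 2 - 1 / ((M : ℝ) + 1) ^ 2)
              = 1 / (M * ((M : ℝ) + 1) ^ 2) := by
            field_simp; ring
          rw [this]; positivity
        nlinarith
      have e2 : (if (M + 1).Prime then Real.log ((M + 1 : ℕ) : ℝ) / ((M + 1 : ℕ) : ℝ) ^ 2 else 0)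
         = (if (M + 1).Prime then Real.log ((M + 1 : ℕ) : ℝ) else 0) / ((M : ℝ) + 1) ^ 2 := by
        split_ifs <;> simp
      rw [e2]
      push_cast at *
      rw [add_div]
      have e3 : Chebyshev.theta (M : ℝ) * (1 / (M : ℝ) ^ 2 - 1 / ((M : ℝ) + 1) ^ 2) =
        Chebyshev.theta (M : ℝ) / (M : ℝ) ^ 2 - Chebyshev.theta (M : ℝ) / ((M : ℝ) + 1) ^ 2 := by ring
      rw [e3] at e1
      linarith
  have hM0 : (0 : ℝ) < M := by exact_mod_cast (by omega : 0 < M)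
  have hth := Chebyshev.theta_le_log4_mul_x hM0.le
  have : Chebyshev.theta M / (M : ℝ) ^ 2 ≤ Real.log 4 / M := by
    rw [div_le_div_iff₀ (by positivity) hM0]; nlinarith
  have e : 2 * Real.log 4 * (1 / Y - 1 / M) = 2 * Real.log 4 / Y - 2 * (Real.log 4 / M) := by ring
  have : 0 ≤ Real.log 4 / M := by positivity
  linarith

end TFS

namespace TFS

def Good (n : ℕ) : Prop :=
  TwoCFree (Real.log (Real.log n)) n ∧ CSeparable (Real.log (Real.log n)) n

noncomputable def YY (N : ℕ) : ℕ := ⌊Real.log (Real.log N) / 2⌋₊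

def E2 (N S : ℕ) : Finset ℕ :=
  (Finset.Ioc S N).biUnion fun s => (Finset.Ioc 0 N).filter (fun n => s ^ 2 ∣ n)

noncomputable def E3 (N Y : ℕ) : Finset ℕ :=
  ((Finset.Ioc Y N).filter Nat.Prime).biUnion fun p =>
    ((Finset.Icc 1 N).filter (fun n => n ≡ 1 [MOD p] ∧ n.Prime)).biUnion fun q =>
      (Finset.Ioc 0 N).filter (fun n => p * q ∣ n)

lemma card_dvd_le (N m : ℕ) :
    (((Finset.Ioc 0 N).filter (fun n => m ∣ n)).card : ℝ) ≤ N / m := by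
  rw [Nat.Ioc_filter_dvd_card_eq_div]
  exact Nat.cast_div_le

lemma E2_card (N S : ℕ) (hS : S ≠ 0) : ((E2 N S).card : ℝ) ≤ N * (1 / S) := by
  have h1 : ((E2 N S).card : ℝ) ≤ ∑ s ∈ Finset.Ioc S N, (N : ℝ) * ((s : ℝ) ^ 2)⁻¹ := by
    have : (E2 N S).card ≤ ∑ s ∈ Finset.Ioc S N, ((Finset.Ioc 0 N).filter (fun n => s ^ 2 ∣ n)).card :=
      Finset.card_biUnion_le
    calc ((E2 N S).card : ℝ) ≤
        ((∑ s ∈ Finset.Ioc S N, ((Finset.Ioc 0 N).filter (fun n => s ^ 2 ∣ n)).card : ℕ) : ℝ) := by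
          exact_mod_cast this
      _ ≤ _ := by
          push_cast
          refine Finset.sum_le_sum fun s _ => ?_
          have := card_dvd_le N (s ^ 2)
          push_cast at this
          rwa [div_eq_mul_inv] at this
  refine h1.trans ?_
  rw [← Finset.mul_sum]
  gcongr
  by_cases h : S ≤ N
  · have := sum_Ioc_inv_sq_le_sub (α := ℝ) hS h
    have h0 : (0 : ℝ) ≤ (N : ℝ)⁻¹ := by positivity
    rw [one_div]; linarith
  · rw [Finset.Ioc_eq_empty (by omega)]; simp

lemma E3_card (N : ℕ) (hN : 1 ≤ Real.log N) (hY : 2 ≤ YY N) (hYN : YY N ≤ N) :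
    ((E3 N (YY N)).card : ℝ) ≤
      N * (1100 * (2 * Real.log 4 / YY N) * ((2 * YY N + 3) / Real.log (YY N) + 1)) := by
  set Y := YY N with hYdef
  set L := Real.log (Real.log N) with hL
  have hYr : (2 : ℝ) ≤ Y := by exact_mod_cast hY
  have hlY : 0 < Real.log Y := Real.log_pos (by linarith)
  have hLY : L + 1 ≤ 2 * Y + 3 := by
    have : L / 2 < Y + 1 := Nat.lt_floor_add_one _
    linarith
  have h1 : ((E3 N Y).card : ℝ) ≤ ∑ p ∈ (Finset.Ioc Y N).filter Nat.Prime,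
      ∑ q ∈ (Finset.Icc 1 N).filter (fun n => n ≡ 1 [MOD p] ∧ n.Prime), (N : ℝ) * (1 / p) * (1 / q) := by
    have : (E3 N Y).card ≤ ∑ p ∈ (Finset.Ioc Y N).filter Nat.Prime,
        ∑ q ∈ (Finset.Icc 1 N).filter (fun n => n ≡ 1 [MOD p] ∧ n.Prime),
          ((Finset.Ioc 0 N).filter (fun n => p * q ∣ n)).card :=
      Finset.card_biUnion_le.trans (Finset.sum_le_sum fun p _ => Finset.card_biUnion_le)
    calc ((E3 N Y).card : ℝ) ≤ ((∑ p ∈ (Finset.Ioc Y N).filter Nat.Prime,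
        ∑ q ∈ (Finset.Icc 1 N).filter (fun n => n ≡ 1 [MOD p] ∧ n.Prime),
          ((Finset.Ioc 0 N).filter (fun n => p * q ∣ n)).card : ℕ) : ℝ) := by exact_mod_cast this
      _ ≤ _ := by
        push_cast
        refine Finset.sum_le_sum fun p _ => Finset.sum_le_sum fun q _ => ?_
        refine (card_dvd_le N (p * q)).trans (le_of_eq ?_)
        push_cast
        rw [mul_assoc, one_div_mul_one_div, mul_one_div]
  refine h1.trans ?_
  have h2 : ∀ p ∈ (Finset.Ioc Y N).filter Nat.Prime,
      ∑ q ∈ (Finset.Icc 1 N).filter (fun n => n ≡ 1 [MOD p] ∧ n.Prime), (N : ℝ) * (1 / p) * (1 / q)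
      ≤ (N * (1100 * ((2 * Y + 3) / Real.log Y + 1))) * (Real.log p / (p : ℝ) ^ 2) := by
    intro p hp
    simp only [Finset.mem_filter, Finset.mem_Ioc] at hp
    have hp0 : (0 : ℝ) < p := by exact_mod_cast hp.2.pos
    have hlp : Real.log Y ≤ Real.log p :=
      Real.log_le_log (by linarith) (by exact_mod_cast hp.1.1.le)
    have hT := T_bound p N hp.2 hN
    have hk : L + 1 + Real.log p ≤ ((2 * Y + 3) / Real.log Y + 1) * Real.log p := by
      have : (2 * Y + 3 : ℝ) ≤ (2 * Y + 3) / Real.log Y * Real.log p := by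
        rw [div_mul_eq_mul_div, le_div_iff₀ hlY]
        gcongr
      linarith
    rw [← Finset.mul_sum]
    calc _ ≤ (N : ℝ) * (1 / p) * (1100 * (((2 * Y + 3) / Real.log Y + 1) * Real.log p) / p) := by
          refine mul_le_mul_of_nonneg_left (hT.trans ?_) (by positivity)
          gcongr
      _ = _ := by field_simp
  refine (Finset.sum_le_sum h2).trans ?_
  rw [← Finset.mul_sum]
  have h3 := prime_tail Y N (by omega) hYN
  calc _ ≤ (N * (1100 * ((2 * Y + 3) / Real.log Y + 1))) * (2 * Real.log 4 / Y) := by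
        gcongr
    _ = _ := by ring

lemma bad_cover (N n : ℕ) (hN : 1 ≤ Real.log N) (hY : 2 ≤ YY N) (hn1 : 1 ≤ n) (hnN : n ≤ N)
    (hbad : ¬ Good n) :
    n ∈ Finset.Icc 1 (Nat.sqrt N) ∪ (E2 N (Nat.sqrt (Nat.sqrt (YY N))) ∪ E3 N (YY N)) := by
  set Y := YY N with hYdef
  by_cases hsm : n ≤ Nat.sqrt N
  · simp [hn1, hsm]
  push Not at hsm
  rw [Nat.sqrt_lt] at hsm
  have hL2 : 2 ≤ Real.log (Real.log N) / 2 := by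
    have : (2 : ℝ) ≤ Y := by exact_mod_cast hY
    refine this.trans (Nat.floor_le ?_)
    have := Real.log_nonneg hN
    linarith
  have hYc : (Y : ℝ) ≤ Real.log (Real.log n) := by
    have hYL : (Y : ℝ) ≤ Real.log (Real.log N) / 2 := Nat.floor_le (by linarith)
    have hN0 : (0 : ℝ) < N := by exact_mod_cast (by omega : 0 < N)
    have h1 : Real.log N ≤ 2 * Real.log n := by
      have : Real.log N ≤ Real.log ((n : ℝ) * n) := Real.log_le_log hN0 (by exact_mod_cast hsm.le)
      have hn0 : (n : ℝ) ≠ 0 := by exact_mod_cast (by omega : n ≠ 0)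
      rw [Real.log_mul hn0 hn0] at this
      linarith
    have h2 : Real.log (Real.log N) ≤ Real.log 2 + Real.log (Real.log n) := by
      rw [← Real.log_mul (by norm_num) (by linarith)]
      exact Real.log_le_log (by linarith) h1
    have := Real.log_two_lt_d9
    linarith
  set c := Real.log (Real.log n)
  rw [Finset.mem_union, Finset.mem_union]
  right
  have hE2 : ∀ s : ℕ, Nat.sqrt (Nat.sqrt Y) < s → s ^ 2 ∣ n → n ∈ E2 N (Nat.sqrt (Nat.sqrt Y)) := by
    intro s hs hd
    simp only [E2, Finset.mem_biUnion, Finset.mem_Ioc, Finset.mem_filter]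
    refine ⟨s, ⟨hs, ?_⟩, ⟨by omega, hnN⟩, hd⟩
    exact (Nat.le_of_dvd (by omega) ((Dvd.intro_left s (by ring : s * s = s ^ 2)).trans hd)).trans hnN
  unfold Good at hbad
  rw [not_and_or] at hbad
  rcases hbad with hbad | hbad
  · left
    unfold TwoCFree at hbad
    push Not at hbad
    obtain ⟨p, hp, hd, hlt⟩ := hbad
    refine hE2 p ?_ hd
    have : Y < p := by exact_mod_cast hYc.trans_lt hlt
    have h1 := Nat.sqrt_le_self (Nat.sqrt Y)
    have h2 := Nat.sqrt_le_self Y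
    omega
  · unfold CSeparable at hbad
    push Not at hbad
    obtain ⟨p, hp, hlt, hpn, q, hq, k, hqk, hmod, hk⟩ := hbad
    have hYp : Y < p := by exact_mod_cast hYc.trans_lt hlt
    by_cases hk1 : k = 1
    · right
      subst hk1
      rw [pow_one] at hqk hmod
      simp only [E3, Finset.mem_biUnion, Finset.mem_Ioc, Finset.mem_filter, Finset.mem_Icc]
      refine ⟨p, ⟨⟨hYp, (Nat.le_of_dvd (by omega) hpn).trans hnN⟩, hp⟩, q,
        ⟨⟨hq.one_lt.le, (Nat.le_of_dvd (by omega) hqk).trans hnN⟩, hmod, hq⟩, ⟨by omega, hnN⟩, ?_⟩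
      have hne : p ≠ q := by
        rintro rfl
        have h0 : p ≡ 0 [MOD p] := Nat.modEq_zero_iff_dvd.2 dvd_rfl
        have := (Nat.modEq_zero_iff_dvd.1 (hmod.symm.trans h0))
        exact hp.one_lt.ne' (Nat.dvd_one.1 this)
      exact Nat.Coprime.mul_dvd_of_dvd_of_dvd ((Nat.coprime_primes hp hq).2 hne) hpn hqk
    · left
      have hk2 : 2 ≤ k := by omega
      refine hE2 (q ^ (k / 2)) ?_ ?_
      · by_contra hcon
        push Not at hcon
        rw [Nat.le_sqrt, Nat.le_sqrt] at hcon
        have h1 : q ^ k ≤ Y := by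
          refine le_trans ?_ hcon
          rw [← pow_add, ← pow_add]
          exact Nat.pow_le_pow_right hq.pos (by omega)
        have h2 : 1 < q ^ k := Nat.one_lt_pow hk hq.one_lt
        have := Nat.ModEq.eq_of_lt_of_lt hmod (by omega) hp.one_lt
        omega
      · rw [← pow_mul]
        exact (pow_dvd_pow q (by omega)).trans hqk

open Classical in
lemma bad_card (N : ℕ) (hN : 1 ≤ Real.log N) (hY : 2 ≤ YY N) (hYN : YY N ≤ N) :
    (((Finset.Icc 1 N).filter (fun n => ¬ Good n)).card : ℝ) ≤
      Real.sqrt N + (N * (1 / (Nat.sqrt (Nat.sqrt (YY N)) : ℕ)) +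
      N * (1100 * (2 * Real.log 4 / YY N) * ((2 * YY N + 3) / Real.log (YY N) + 1))) := by
  have h0 : ((Finset.Icc 1 N).filter (fun n => ¬ Good n)).card ≤
      (Finset.Icc 1 (Nat.sqrt N)).card + ((E2 N (Nat.sqrt (Nat.sqrt (YY N)))).card
        + (E3 N (YY N)).card) := by
    calc _ ≤ (Finset.Icc 1 (Nat.sqrt N) ∪ (E2 N (Nat.sqrt (Nat.sqrt (YY N))) ∪ E3 N (YY N))).card := by
          apply Finset.card_le_card
          intro n hn
          rw [Finset.mem_filter, Finset.mem_Icc] at hn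
          exact bad_cover N n hN hY hn.1.1 hn.1.2 hn.2
      _ ≤ _ := (Finset.card_union_le _ _).trans (Nat.add_le_add_left (Finset.card_union_le _ _) _)
  have hS : Nat.sqrt (Nat.sqrt (YY N)) ≠ 0 := by
    have : 0 < Nat.sqrt (Nat.sqrt (YY N)) := Nat.sqrt_pos.2 (Nat.sqrt_pos.2 (by omega))
    omega
  have h1 : (((Finset.Icc 1 (Nat.sqrt N)).card : ℕ) : ℝ) ≤ Real.sqrt N := by
    simp only [Nat.card_Icc, Nat.add_sub_cancel]
    exact Real.nat_sqrt_le_real_sqrt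
  have h2 := E2_card N _ hS
  have h3 := E3_card N hN hY hYN
  have h0' : (((Finset.Icc 1 N).filter (fun n => ¬ Good n)).card : ℝ) ≤
      ((Finset.Icc 1 (Nat.sqrt N)).card : ℝ) + ((E2 N (Nat.sqrt (Nat.sqrt (YY N)))).card
        + (E3 N (YY N)).card) := by exact_mod_cast h0
  linarith

open Filter Topology in
lemma err_tendsto : Tendsto (fun Y : ℕ => (1 / (Nat.sqrt (Nat.sqrt Y) : ℕ) : ℝ) +
      (1100 * (2 * Real.log 4 / Y) * ((2 * Y + 3) / Real.log Y + 1))) atTop (𝓝 0) := by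
  have hs : Tendsto Nat.sqrt atTop atTop := by
    rw [tendsto_atTop_atTop]
    intro b
    exact ⟨b * b, fun a ha => Nat.le_sqrt.2 ha⟩
  have h1 : Tendsto (fun Y : ℕ => (1 / (Nat.sqrt (Nat.sqrt Y) : ℕ) : ℝ)) atTop (𝓝 0) :=
    (tendsto_one_div_atTop_nhds_zero_nat (𝕜 := ℝ)).comp (hs.comp hs)
  have hi : Tendsto (fun Y : ℕ => (1 / Y : ℝ)) atTop (𝓝 0) := tendsto_one_div_atTop_nhds_zero_nat
  have hl : Tendsto (fun Y : ℕ => (Real.log Y)⁻¹) atTop (𝓝 0) :=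
    tendsto_inv_atTop_zero.comp (Real.tendsto_log_atTop.comp tendsto_natCast_atTop_atTop)
  have h2 : Tendsto (fun Y : ℕ => 2200 * Real.log 4 * ((2 + 3 * (1 / Y : ℝ)) * (Real.log Y)⁻¹ + 1 / Y))
      atTop (𝓝 (2200 * Real.log 4 * ((2 + 3 * 0) * 0 + 0))) :=
    ((((hi.const_mul 3).const_add 2).mul hl).add hi).const_mul _
  have h3 : Tendsto (fun Y : ℕ => (1100 * (2 * Real.log 4 / Y) * ((2 * Y + 3) / Real.log Y + 1) : ℝ))
      atTop (𝓝 0) := by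
    have e0 : (2200 * Real.log 4 * ((2 + 3 * 0) * 0 + 0)) = 0 := by ring
    rw [e0] at h2
    refine h2.congr' ?_
    filter_upwards [eventually_gt_atTop 0] with Y hY
    have : (Y : ℝ) ≠ 0 := by exact_mod_cast hY.ne'
    rw [div_eq_mul_inv (2 * (Y : ℝ) + 3)]
    field_simp
    ring
  simpa using h1.add h3

open Filter Topology in
lemma YY_tendsto : Tendsto YY atTop atTop := by
  have h : Tendsto (fun N : ℕ => Real.log (Real.log N) / 2) atTop atTop :=
    (Real.tendsto_log_atTop.comp (Real.tendsto_log_atTop.comp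
      tendsto_natCast_atTop_atTop)).atTop_div_const (by norm_num)
  exact tendsto_nat_floor_atTop.comp h

end TFS

end Helpers

/-- The set of positive integers `n` that are both `(2, log log n)`-free and
`(log log n)`-separable has natural density `1`. -/
theorem twoFree_separable_density_one :
    Filter.Tendsto (fun N : ℕ =>
      (Nat.card {n : ℕ | n ∈ Finset.Icc 1 N ∧
        TwoCFree (Real.log (Real.log n)) n ∧ CSeparable (Real.log (Real.log n)) n} : ℝ) / N)
      Filter.atTop (nhds 1) := by
  classical
  open Filter Topology TFS in
  have hbadlim : Tendsto (fun N : ℕ =>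
      (((Finset.Icc 1 N).filter (fun n => ¬ Good n)).card : ℝ) / N) atTop (𝓝 0) := by
    have hsq : Tendsto (fun N : ℕ => (Real.sqrt N)⁻¹) atTop (𝓝 0) :=
      tendsto_inv_atTop_zero.comp (Real.tendsto_sqrt_atTop.comp tendsto_natCast_atTop_atTop)
    have hup := hsq.add (err_tendsto.comp YY_tendsto)
    rw [add_zero] at hup
    refine tendsto_of_tendsto_of_tendsto_of_le_of_le' tendsto_const_nhds hup
      (Eventually.of_forall fun N => by positivity) ?_
    have hlog : Tendsto (fun N : ℕ => Real.log N) atTop atTop :=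
      Real.tendsto_log_atTop.comp tendsto_natCast_atTop_atTop
    filter_upwards [hlog.eventually_ge_atTop 1, YY_tendsto.eventually_ge_atTop 2,
      eventually_gt_atTop 0] with N hN hY hN0
    have hNr : (0 : ℝ) < N := by exact_mod_cast hN0
    have hYN : YY N ≤ N := by
      unfold YY
      apply Nat.floor_le_of_le
      have h1 := Real.log_le_self (Real.log_nonneg (by exact_mod_cast hN0 : (1 : ℝ) ≤ N))
      have h2 := Real.log_le_self hNr.le
      have h3 := Real.log_nonneg hN
      linarith
    have hb := bad_card N hN hY hYN
    simp only [Function.comp]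
    rw [div_le_iff₀ hNr]
    refine hb.trans (le_of_eq ?_)
    have hs : (Real.sqrt N)⁻¹ * N = Real.sqrt N := by
      have := Real.mul_self_sqrt hNr.le
      have h0 := (Real.sqrt_pos.2 hNr).ne'
      field_simp
      rw [sq]; exact this.symm
    rw [add_mul, hs]
    ring
  have h1 := hbadlim.const_sub 1
  rw [sub_zero] at h1
  refine h1.congr' ?_
  filter_upwards [Filter.eventually_gt_atTop 0] with N hN0
  have hNr : (N : ℝ) ≠ 0 := by exact_mod_cast hN0.ne'
  have hset : {n : ℕ | n ∈ Finset.Icc 1 N ∧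
        TwoCFree (Real.log (Real.log n)) n ∧ CSeparable (Real.log (Real.log n)) n}
      = (((Finset.Icc 1 N).filter (fun n => TFS.Good n) : Finset ℕ) : Set ℕ) := by
    ext n
    rw [Finset.mem_coe, Finset.mem_filter]
    rfl
  rw [hset, Nat.card_coe_set_eq, Set.ncard_coe_finset]
  have hc := Finset.card_filter_add_card_filter_not (s := Finset.Icc 1 N) (fun n => TFS.Good n)
  rw [Nat.card_Icc, Nat.add_sub_cancel] at hc
  have hc' : (((Finset.Icc 1 N).filter (fun n => TFS.Good n)).card : ℝ)
      + (((Finset.Icc 1 N).filter (fun n => ¬ TFS.Good n)).card : ℝ) = N := by exact_mod_cast hc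
  rw [eq_div_iff hNr, sub_mul, div_mul_cancel₀ _ hNr]
  linarith
end

section
/- The set D̂ of positive integers n that are simultaneously pseudo-square-free, (2, log log n)-free, and (log log n)-separable has natural density 1. In particular, if D₁ and D₂ are two sets of positive integers each of natural density 1, then D₁ ∩ D₂ has natural density 1. -/
/-- A set `D` of positive integers has natural density `1` if
`|D ∩ {1,…,N}| / N → 1` as `N → ∞`. -/
def HasDensityOne (D : Set ℕ) : Prop :=
  Filter.Tendsto (fun N : ℕ =>
    (Nat.card {n : ℕ | n ∈ Finset.Icc 1 N ∧ n ∈ D} : ℝ) / N)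
    Filter.atTop (nhds 1)

open Finset

/-- number theory core: the two bad events cover everything -/
theorem good_of {n : ℕ}
    (h1 : ∀ r : ℕ, r ^ 2 ∣ n → (r : ℝ) ^ 3 ≤ Real.log (Real.log n))
    (h2 : ∀ p q : ℕ, p.Prime → Real.log (Real.log n) < (p : ℝ) → q.Prime → q ≡ 1 [MOD p] →
      ¬ p * q ∣ n) :
    (∀ p : ℕ, p.Prime → p ^ 2 ∣ n → (p : ℝ) ≤ Real.log (Real.log n)) ∧
    (∀ q k : ℕ, q.Prime → 2 ≤ k → q ^ k ∣ n → (q : ℝ) ^ k ≤ Real.log (Real.log n)) ∧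
    (Real.log (Real.log n) ≤ Real.log n) ∧
    (∀ p : ℕ, p.Prime → Real.log (Real.log n) < (p : ℝ) → p ∣ n →
      ∀ q : ℕ, q.Prime → ∀ k : ℕ, q ^ k ∣ n → q ^ k ≡ 1 [MOD p] → k = 0) := by
  have key : ∀ q k : ℕ, q.Prime → 2 ≤ k → q ^ k ∣ n → (q : ℝ) ^ k ≤ Real.log (Real.log n) := by
    intro q k hq hk hd
    have h := h1 (q ^ (k / 2)) (by
      rw [← pow_mul]
      exact (pow_dvd_pow q (by omega)).trans hd)
    refine le_trans ?_ h
    push_cast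
    rw [← pow_mul]
    exact pow_le_pow_right₀ (by exact_mod_cast hq.one_lt.le) (by omega)
  refine ⟨?_, key, ?_, ?_⟩
  · intro p hp hd
    have h := h1 p hd
    have : (1:ℝ) ≤ p := by exact_mod_cast hp.one_lt.le
    exact (le_self_pow₀ this (by norm_num)).trans h
  · have : 0 ≤ Real.log n := Real.log_natCast_nonneg n
    exact Real.log_le_self this
  · intro p hp hlp hpn q hq k hqk hmod
    by_contra hk
    have hk1 : 1 < q ^ k := Nat.one_lt_pow hk hq.one_lt
    rcases Nat.lt_or_ge k 2 with h | h
    · obtain rfl : k = 1 := by omega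
      rw [pow_one] at *
      refine h2 p q hp hlp hq hmod ?_
      refine Nat.Coprime.mul_dvd_of_dvd_of_dvd ?_ hpn hqk
      rw [Nat.coprime_primes hp hq]
      rintro rfl
      have : p ∣ p - 1 := (Nat.modEq_iff_dvd' hp.one_lt.le).1 hmod.symm
      have := Nat.le_of_dvd (by have := hp.one_lt; omega) this
      have := hp.one_lt
      omega
    · have h3 := key q k hq h hqk
      have : p ∣ q ^ k - 1 := (Nat.modEq_iff_dvd' hk1.le).1 hmod.symm
      have := Nat.le_of_dvd (by omega) this
      have h4 : p ≤ q ^ k := by omega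
      have : (p : ℝ) ≤ (q:ℝ) ^ k := by exact_mod_cast h4
      linarith

theorem harm_sq (z : ℕ) : ∑ b ∈ Icc 1 z, (1 : ℝ) / (b:ℝ) ^ 2 ≤ 2 := by
  have := sum_Ioc_inv_sq_le_sub (α := ℝ) (k := 1) (n := z)
  rcases Nat.eq_zero_or_pos z with rfl | hz
  · simp
  · have h := this (by norm_num) hz
    rw [← sum_Ioc_add_eq_sum_Icc hz]
    simp only [one_div] at *
    norm_num at *
    have : (0:ℝ) ≤ (z:ℝ)⁻¹ := by positivity
    linarith

theorem tail_sq (R N : ℕ) (hR : 0 < R) : ∑ b ∈ Ioc R N, (1 : ℝ) / (b:ℝ) ^ 2 ≤ 1 / R := by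
  rcases Nat.lt_or_ge N R with h | h
  · rw [Ioc_eq_empty_of_le h.le]; simp
  · have h := sum_Ioc_inv_sq_le_sub (α := ℝ) hR.ne' h
    simp only [one_div] at *
    have : (0:ℝ) ≤ (N:ℝ)⁻¹ := by positivity
    linarith

def KK (p z : ℕ) : Finset ℕ := {k ∈ Icc 1 z | Squarefree k ∧ Nat.Coprime k p}
noncomputable def SS (p z : ℕ) : ℝ := ∑ k ∈ KK p z, (1:ℝ) / k

theorem harm_lower (z : ℕ) : Real.log z ≤ ∑ n ∈ Icc 1 z, (1:ℝ) / n := by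
  rcases Nat.eq_zero_or_pos z with rfl | hz
  · simp
  have := log_add_one_le_harmonic z
  have h2 : ((harmonic z : ℚ) : ℝ) = ∑ n ∈ Icc 1 z, (1:ℝ) / n := by
    rw [harmonic_eq_sum_Icc]; push_cast; simp
  rw [← h2]
  refine le_trans ?_ this
  apply Real.log_le_log
  · exact_mod_cast hz
  · push_cast; linarith

theorem SS_lower (p z : ℕ) (hp : p.Prime) : Real.log z / 4 ≤ SS p z := by
  have h1 : ∑ n ∈ Icc 1 z with Nat.Coprime n p, (1:ℝ)/n ≤ 2 * SS p z := by
    have : ∑ x ∈ KK p z ×ˢ Icc 1 z, (1:ℝ) / ((x.2 ^ 2 * x.1 : ℕ) : ℝ) ≤ 2 * SS p z := by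
      rw [sum_product]
      unfold SS
      rw [mul_sum]
      apply sum_le_sum
      intro a ha
      have := harm_sq z
      calc _ = ∑ y ∈ Icc 1 z, (1 / (y:ℝ)^2) * (1 / (a:ℝ)) := by
            apply sum_congr rfl; intro y _; push_cast; rw [one_div_mul_one_div]
        _ ≤ _ := by
            rw [← sum_mul]
            gcongr
    refine le_trans ?_ this
    have hsub : {n ∈ Icc 1 z | Nat.Coprime n p} ⊆ (KK p z ×ˢ Icc 1 z).image (fun x => x.2 ^ 2 * x.1) := by
      intro n hn
      simp only [mem_filter, mem_Icc] at hn
      obtain ⟨a, b, ha, hb, hab, hs⟩ := Nat.sq_mul_squarefree_of_pos (n := n) (by omega)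
      simp only [mem_image, mem_product, KK, mem_filter, mem_Icc, Prod.exists]
      have hbn : b ^ 2 ∣ n := ⟨a, hab.symm⟩
      have han : a ∣ n := ⟨b ^ 2, by rw [mul_comm]; exact hab.symm⟩
      have := Nat.le_of_dvd (by omega) hbn
      have := Nat.le_of_dvd (by omega) han
      have : b ≤ b ^ 2 := Nat.le_self_pow (by norm_num) b
      refine ⟨a, b, ⟨⟨⟨by omega, by omega⟩, hs, hn.2.coprime_dvd_left han⟩, by omega, by omega⟩, hab⟩
    refine (sum_le_sum_of_subset_of_nonneg hsub (fun i _ _ => by positivity)).trans ?_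
    apply sum_image_le_of_nonneg
    intro i _; positivity
  have h2 : ∑ n ∈ Icc 1 z with ¬ Nat.Coprime n p, (1:ℝ)/n ≤ (1/2) * ∑ n ∈ Icc 1 z, (1:ℝ)/n := by
    rw [mul_sum]
    have hsub : {n ∈ Icc 1 z | ¬ Nat.Coprime n p} ⊆ (Icc 1 z).image (fun m => p * m) := by
      intro n hn
      simp only [mem_filter, mem_Icc] at hn
      have : p ∣ n := by
        by_contra h
        exact hn.2 ((hp.coprime_iff_not_dvd.2 h).symm)
      obtain ⟨m, rfl⟩ := this
      simp only [mem_image, mem_Icc]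
      refine ⟨m, ⟨?_, ?_⟩, rfl⟩
      · rcases Nat.eq_zero_or_pos m with rfl | h
        · simp at hn
        · exact h
      · exact (Nat.le_mul_of_pos_left m hp.pos).trans hn.1.2
    refine (sum_le_sum_of_subset_of_nonneg hsub (fun i _ _ => by positivity)).trans ?_
    refine (sum_image_le_of_nonneg (fun i _ => by positivity)).trans ?_
    apply sum_le_sum
    intro m _
    push_cast
    rw [one_div_mul_one_div]
    rcases Nat.eq_zero_or_pos m with rfl | h
    · simp
    have : (2:ℝ) ≤ p := by exact_mod_cast hp.two_le
    have : (0:ℝ) < m := by exact_mod_cast h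
    gcongr
  have h3 := sum_filter_add_sum_filter_not (Icc 1 z) (fun n => Nat.Coprime n p) (fun n => (1:ℝ)/n)
  have h4 := harm_lower z
  linarith

theorem count_ap (p e J : ℕ) (he : 0 < e) (hc : Nat.Coprime e p) :
    |((#{j ∈ Icc 1 J | e ∣ p * j + 1} : ℕ) : ℝ) - (J:ℝ) / e| ≤ 1 := by
  obtain ⟨v, hv⟩ : ∃ v : ℕ, e ∣ p * v + 1 := by
    obtain ⟨m, hm⟩ := Nat.exists_mul_mod_eq_of_coprime (k := e) (n := p) (e - 1 : ℕ) hc.symm he.ne'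
    refine ⟨m, ?_⟩
    have h : p * m + 1 ≡ (e - 1) + 1 [MOD e] := Nat.ModEq.add_right 1 hm.2
    rw [Nat.sub_add_cancel he] at h
    exact (Nat.modEq_zero_iff_dvd).1 (h.trans (by simp [Nat.ModEq]))
  have hset : {j ∈ Icc 1 J | e ∣ p * j + 1} = {j ∈ Ioc 0 J | j ≡ v [MOD e]} := by
    ext j
    simp only [mem_filter, mem_Icc, mem_Ioc]
    refine and_congr (by omega) ?_
    constructor
    · intro h
      have h1 : p * j + 1 ≡ p * v + 1 [MOD e] :=
        ((Nat.modEq_zero_iff_dvd).2 h).trans ((Nat.modEq_zero_iff_dvd).2 hv).symm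
      exact Nat.ModEq.cancel_left_of_coprime hc (Nat.ModEq.add_right_cancel' 1 h1)
    · intro h
      have h1 : p * j + 1 ≡ p * v + 1 [MOD e] := (h.mul_left p).add_right 1
      exact (Nat.modEq_zero_iff_dvd).1 (h1.trans ((Nat.modEq_zero_iff_dvd).2 hv))
  have hcard := Nat.Ioc_filter_modEq_card 0 J he v
  rw [hset]
  have he' : (0:ℚ) < e := by exact_mod_cast he
  have f1 := Int.floor_le (((J:ℚ) - v) / e)
  have f2 := Int.lt_floor_add_one (((J:ℚ) - v) / e)
  have f3 := Int.floor_le ((((0:ℕ):ℚ) - v) / e)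
  have f4 := Int.lt_floor_add_one ((((0:ℕ):ℚ) - v) / e)
  have mono : ⌊(((0:ℕ):ℚ) - v) / e⌋ ≤ ⌊((J:ℚ) - v) / e⌋ := by
    apply Int.floor_le_floor
    gcongr
    simp
  rw [max_eq_left (by linarith)] at hcard
  have hq : |((#{j ∈ Ioc 0 J | j ≡ v [MOD e]} : ℕ) : ℚ) - (J:ℚ) / e| ≤ 1 := by
    have : ((#{j ∈ Ioc 0 J | j ≡ v [MOD e]} : ℕ) : ℚ) = 
       (⌊((J:ℚ) - v) / e⌋ : ℚ) - (⌊(((0:ℕ):ℚ) - v) / e⌋ : ℚ) := by exact_mod_cast hcard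
    rw [this]
    have e1 : ((J:ℚ) - v) / e - (((0:ℕ):ℚ) - v) / e = J / e := by
      rw [← sub_div]; simp
    rw [abs_le]
    constructor <;> linarith
  have := (Rat.cast_le (K := ℝ)).2 hq
  push_cast at this
  exact this

open ArithmeticFunction in
theorem moeb_sum (k m : ℕ) (hm : 0 < m) (hk : 0 < k) (s : Finset ℕ) (hs : ∀ d, d ∣ m → d ∈ s) :
    ∑ d ∈ s with k ∣ d ∧ d ∣ m, ((moebius (m / d) : ℤ) : ℝ) = if m = k then 1 else 0 := by
  by_cases hkm : k ∣ m
  · obtain ⟨t, rfl⟩ := hkm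
    have ht : 0 < t := Nat.pos_of_mul_pos_left hm
    have h0 : ∑ e ∈ t.divisors, ((moebius (t / e) : ℤ) : ℝ) = if t = 1 then 1 else 0 := by
      have := congrArg (fun f : ArithmeticFunction ℝ => f t) (coe_moebius_mul_coe_zeta (R := ℝ))
      simp only [coe_mul_zeta_apply, one_apply] at this
      rw [← this]
      exact Nat.sum_div_divisors t (fun e => ((moebius e : ℤ) : ℝ))
    have h1 : (k * t = k) ↔ t = 1 := by
      constructor
      · intro h; exact Nat.eq_of_mul_eq_mul_left hk (by simpa using h)
      · rintro rfl; simp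
    simp only [h1]
    rw [← h0]
    symm
    apply sum_bij (fun e _ => k * e)
    · intro e he
      simp only [Nat.mem_divisors] at he
      simp only [mem_filter]
      exact ⟨hs _ (Nat.mul_dvd_mul_left k he.1), Dvd.intro _ rfl, Nat.mul_dvd_mul_left k he.1⟩
    · intro a _ b _ h
      exact Nat.eq_of_mul_eq_mul_left hk h
    · intro d hd
      simp only [mem_filter] at hd
      obtain ⟨_, ⟨e, rfl⟩, h⟩ := hd
      exact ⟨e, by simp [Nat.mem_divisors, ht.ne', Nat.dvd_of_mul_dvd_mul_left hk h], rfl⟩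
    · intro e he
      rw [Nat.mul_div_mul_left _ _ hk]
  · rw [if_neg (by rintro rfl; exact hkm dvd_rfl)]
    apply sum_eq_zero
    intro d hd
    simp only [mem_filter] at hd
    exact absurd (hd.2.1.trans hd.2.2) hkm

theorem KK_dvd {p z k d : ℕ} (hk : k ∈ KK p z) (hd : d ∣ k) : d ∈ KK p z := by
  simp only [KK, mem_filter, mem_Icc] at *
  have := Nat.le_of_dvd (by omega) hd
  have := Nat.pos_of_dvd_of_pos hd (by omega)
  exact ⟨⟨by omega, by omega⟩, hk.2.1.squarefree_of_dvd hd, hk.2.2.coprime_dvd_left hd⟩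

open ArithmeticFunction in
/-- The Selberg type upper bound sieve weights. -/
noncomputable def yy (p z k : ℕ) : ℝ := ((moebius k : ℤ) : ℝ) / (k * SS p z)
open ArithmeticFunction in
noncomputable def ww (p z d : ℕ) : ℝ := ∑ k ∈ KK p z with d ∣ k, ((moebius (k / d) : ℤ) : ℝ) * yy p z k

theorem KK_pos {p z k : ℕ} (hk : k ∈ KK p z) : 0 < k := by
  simp only [KK, mem_filter, mem_Icc] at hk; omega

theorem SS_pos {p z : ℕ} (hz : 0 < z) : 0 < SS p z := by
  have h1 : 1 ∈ KK p z := by simp [KK]; omega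
  refine lt_of_lt_of_le one_pos ?_
  have := single_le_sum (f := fun k : ℕ => (1:ℝ) / k) (s := KK p z) (fun i _ => by positivity) h1
  simpa [SS] using this

theorem ww_inv (p z k : ℕ) (hk : k ∈ KK p z) : ∑ d ∈ KK p z with k ∣ d, ww p z d = yy p z k := by
  unfold ww
  have : ∀ d ∈ KK p z, True := fun _ _ => trivial
  simp only [sum_filter]
  have e1 : ∀ d ∈ KK p z, (if k ∣ d then ∑ m ∈ KK p z, (if d ∣ m then
      ((ArithmeticFunction.moebius (m / d) : ℤ) : ℝ) * yy p z m else 0) else 0) =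
      ∑ m ∈ KK p z, yy p z m * (if k ∣ d ∧ d ∣ m then ((ArithmeticFunction.moebius (m / d) : ℤ) : ℝ) else 0) := by
    intro d _
    split_ifs with h
    · apply sum_congr rfl; intro m _
      by_cases h2 : d ∣ m <;> simp [h, h2, mul_comm]
    · symm; apply sum_eq_zero; intro m _; simp [h]
  rw [sum_congr rfl e1, sum_comm]
  have e2 : ∀ m ∈ KK p z, ∑ d ∈ KK p z, yy p z m * (if k ∣ d ∧ d ∣ m then ((ArithmeticFunction.moebius (m / d) : ℤ) : ℝ) else 0)
      = if m = k then yy p z m else 0 := by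
    intro m hm
    rw [← mul_sum, ← sum_filter, moeb_sum k m (KK_pos hm) (KK_pos hk) _ (fun d hd => KK_dvd hm hd)]
    simp
  rw [sum_congr rfl e2, sum_ite_eq' , if_pos hk]

theorem yy_abs (p z k : ℕ) (hz : 0 < z) : |yy p z k| ≤ 1 / (k * SS p z) := by
  unfold yy
  have hS := SS_pos (p := p) hz
  rw [abs_div, abs_of_nonneg (show 0 ≤ (k:ℝ) * SS p z by positivity)]
  gcongr
  have := ArithmeticFunction.abs_moebius_le_one (n := k)
  exact_mod_cast this

theorem sum_yinv (p z : ℕ) (hz : 0 < z) : ∑ k ∈ KK p z, 1 / ((k:ℝ) * SS p z) = 1 := by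
  have hS := SS_pos (p := p) hz
  have : ∀ k ∈ KK p z, 1 / ((k:ℝ) * SS p z) = (1 / (k:ℝ)) / SS p z := by
    intro k _; rw [div_div]
  rw [sum_congr rfl this, ← sum_div]
  exact div_self hS.ne'

theorem ww_abs (p z d : ℕ) (hz : 0 < z) : |ww p z d| ≤ 1 := by
  have hS := SS_pos (p := p) hz
  rw [← sum_yinv p z hz]
  unfold ww
  refine (abs_sum_le_sum_abs _ _).trans ?_
  refine le_trans ?_ (sum_le_sum_of_subset_of_nonneg (filter_subset (fun k => d ∣ k) _) (fun i _ _ => by positivity))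
  apply sum_le_sum
  intro k _
  rw [abs_mul]
  have h1 : |((ArithmeticFunction.moebius (k / d) : ℤ) : ℝ)| ≤ 1 := by
    exact_mod_cast ArithmeticFunction.abs_moebius_le_one (n := k / d)
  have h2 := yy_abs p z k hz
  calc _ ≤ 1 * |yy p z k| := by gcongr
    _ ≤ _ := by rw [one_mul]; exact h2

theorem ww_one (p z : ℕ) (hz : 0 < z) : ww p z 1 = 1 := by
  unfold ww
  simp only [one_dvd, filter_true, Nat.div_one]
  rw [← sum_yinv p z hz]
  apply sum_congr rfl
  intro k hk
  unfold yy
  have hsq : Squarefree k := by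
    simp only [KK, mem_filter] at hk; exact hk.2.1
  have : ((ArithmeticFunction.moebius k : ℤ) : ℝ) ^ 2 = 1 := by
    exact_mod_cast ArithmeticFunction.moebius_sq_eq_one_of_squarefree hsq
  rw [← mul_div_assoc, ← sq, this]

/-- main quadratic form -/
theorem quad (p z : ℕ) (hz : 0 < z) :
    ∑ a ∈ KK p z, ∑ b ∈ KK p z, ww p z a * ww p z b * (Nat.gcd a b : ℝ) ≤ 1 / SS p z := by
  have hS := SS_pos (p := p) hz
  have hg : ∀ a ∈ KK p z, ∀ b ∈ KK p z, (Nat.gcd a b : ℝ) =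
      ∑ k ∈ KK p z, if k ∣ a ∧ k ∣ b then (Nat.totient k : ℝ) else 0 := by
    intro a ha b hb
    rw [← sum_filter]
    have : {k ∈ KK p z | k ∣ a ∧ k ∣ b} = (Nat.gcd a b).divisors := by
      ext k
      simp only [mem_filter, Nat.mem_divisors, Nat.dvd_gcd_iff]
      constructor
      · rintro ⟨_, h⟩; exact ⟨h, (Nat.gcd_pos_of_pos_left _ (KK_pos ha)).ne'⟩
      · rintro ⟨h, _⟩; exact ⟨KK_dvd ha h.1, h⟩
    rw [this]
    exact_mod_cast (Nat.sum_totient (Nat.gcd a b)).symm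
  have e : ∑ a ∈ KK p z, ∑ b ∈ KK p z, ww p z a * ww p z b * (Nat.gcd a b : ℝ) =
      ∑ k ∈ KK p z, (Nat.totient k : ℝ) * (yy p z k) ^ 2 := by
    calc _ = ∑ a ∈ KK p z, ∑ b ∈ KK p z, ∑ k ∈ KK p z, 
        (Nat.totient k : ℝ) * ((if k ∣ a then ww p z a else 0) * (if k ∣ b then ww p z b else 0)) := by
          apply sum_congr rfl; intro a ha
          apply sum_congr rfl; intro b hb
          rw [hg a ha b hb, mul_sum]
          apply sum_congr rfl; intro k _
          by_cases h1 : k ∣ a <;> by_cases h2 : k ∣ b <;> simp [h1, h2, mul_comm]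
      _ = ∑ k ∈ KK p z, ∑ a ∈ KK p z, ∑ b ∈ KK p z, 
        (Nat.totient k : ℝ) * ((if k ∣ a then ww p z a else 0) * (if k ∣ b then ww p z b else 0)) := by
          exact (sum_congr rfl fun a _ => sum_comm).trans sum_comm
      _ = _ := by
          apply sum_congr rfl; intro k hk
          rw [← ww_inv p z k hk, sq, sum_filter, sum_mul_sum, mul_sum]
          simp_rw [mul_sum]
  rw [e]
  have : 1 / SS p z = ∑ k ∈ KK p z, 1 / ((k:ℝ) * SS p z) / SS p z := by
    rw [← sum_div, sum_yinv p z hz]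
  rw [this]
  apply sum_le_sum
  intro k hk
  have hk0 : (0:ℝ) < k := by exact_mod_cast KK_pos hk
  have h1 : (Nat.totient k : ℝ) ≤ k := by exact_mod_cast Nat.totient_le k
  have h2 : yy p z k ^ 2 ≤ (1 / (k * SS p z)) ^ 2 := by
    rw [← sq_abs]
    gcongr
    exact yy_abs p z k hz
  calc _ ≤ (k:ℝ) * (1 / (k * SS p z)) ^ 2 := by gcongr
    _ = _ := by field_simp

theorem KK_coprime {p z k : ℕ} (hk : k ∈ KK p z) : Nat.Coprime k p := by
  simp only [KK, mem_filter] at hk; exact hk.2.2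

theorem KK_le {p z k : ℕ} (hk : k ∈ KK p z) : k ≤ z := by
  simp only [KK, mem_filter, mem_Icc] at hk; exact hk.1.2

theorem sieve_sum (p z J : ℕ) (hz : 0 < z) :
    ∑ j ∈ Icc 1 J, (∑ d ∈ KK p z with d ∣ p * j + 1, (d:ℝ) * ww p z d) ^ 2 ≤
      J / SS p z + (z:ℝ) ^ 4 := by
  have hS := SS_pos (p := p) hz
  have e : ∑ j ∈ Icc 1 J, (∑ d ∈ KK p z with d ∣ p * j + 1, (d:ℝ) * ww p z d) ^ 2 =
      ∑ a ∈ KK p z, ∑ b ∈ KK p z, ((a:ℝ) * ww p z a) * ((b:ℝ) * ww p z b) *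
        ((#{j ∈ Icc 1 J | Nat.lcm a b ∣ p * j + 1} : ℕ) : ℝ) := by
    calc _ = ∑ j ∈ Icc 1 J, ∑ a ∈ KK p z, ∑ b ∈ KK p z, ((a:ℝ) * ww p z a) * ((b:ℝ) * ww p z b) *
            (if Nat.lcm a b ∣ p * j + 1 then 1 else 0) := by
          apply sum_congr rfl; intro j _
          rw [sq, sum_filter, sum_mul_sum]
          apply sum_congr rfl; intro a _
          apply sum_congr rfl; intro b _
          by_cases h1 : a ∣ p * j + 1 <;> by_cases h2 : b ∣ p * j + 1 <;> simp [h1, h2, Nat.lcm_dvd_iff]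
      _ = ∑ a ∈ KK p z, ∑ b ∈ KK p z, ∑ j ∈ Icc 1 J, ((a:ℝ) * ww p z a) * ((b:ℝ) * ww p z b) *
            (if Nat.lcm a b ∣ p * j + 1 then 1 else 0) := by
          exact sum_comm.trans (sum_congr rfl fun a _ => sum_comm)
      _ = _ := by
          apply sum_congr rfl; intro a _
          apply sum_congr rfl; intro b _
          rw [← mul_sum, sum_boole]
  rw [e]
  have step : ∀ a ∈ KK p z, ∀ b ∈ KK p z, ((a:ℝ) * ww p z a) * ((b:ℝ) * ww p z b) *
        ((#{j ∈ Icc 1 J | Nat.lcm a b ∣ p * j + 1} : ℕ) : ℝ) ≤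
        J * (ww p z a * ww p z b * (Nat.gcd a b : ℝ)) + (z:ℝ) * z := by
    intro a ha b hb
    have ha0 : (0:ℝ) < a := by exact_mod_cast KK_pos ha
    have hb0 : (0:ℝ) < b := by exact_mod_cast KK_pos hb
    have haz : (a:ℝ) ≤ z := by exact_mod_cast KK_le ha
    have hbz : (b:ℝ) ≤ z := by exact_mod_cast KK_le hb
    have hl0 : 0 < Nat.lcm a b := Nat.lcm_pos (KK_pos ha) (KK_pos hb)
    have hc := count_ap p (Nat.lcm a b) J hl0
      (Nat.Coprime.coprime_dvd_left (Nat.lcm_dvd_mul a b) (Nat.Coprime.mul_left (KK_coprime ha) (KK_coprime hb)))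
    set c : ℝ := ((#{j ∈ Icc 1 J | Nat.lcm a b ∣ p * j + 1} : ℕ) : ℝ)
    have hgl : (Nat.gcd a b : ℝ) * (Nat.lcm a b : ℝ) = a * b := by exact_mod_cast Nat.gcd_mul_lcm a b
    have hl1 : (0:ℝ) < (Nat.lcm a b : ℝ) := by exact_mod_cast hl0
    have e1 : ((a:ℝ) * ww p z a) * ((b:ℝ) * ww p z b) * c = 
      J * (ww p z a * ww p z b * (Nat.gcd a b : ℝ)) + 
      ((a:ℝ) * ww p z a) * ((b:ℝ) * ww p z b) * (c - J / (Nat.lcm a b : ℝ)) := by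
      field_simp
      linear_combination (- (J : ℝ)) * ww p z a * ww p z b * hgl
    rw [e1]
    refine add_le_add le_rfl ?_
    refine (le_abs_self _).trans ?_
    rw [abs_mul, abs_mul, abs_mul, abs_mul, abs_of_pos ha0, abs_of_pos hb0]
    have wa := ww_abs p z a hz
    have wb := ww_abs p z b hz
    calc _ ≤ ((z:ℝ) * 1) * (z * 1) * 1 := by gcongr
      _ = _ := by ring
  have hcard : (#(KK p z) : ℝ) ≤ z := by
    have : #(KK p z) ≤ #(Icc 1 z) := card_le_card (filter_subset _ _)
    rw [Nat.card_Icc] at this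
    exact_mod_cast this
  calc _ ≤ ∑ a ∈ KK p z, ∑ b ∈ KK p z, (J * (ww p z a * ww p z b * (Nat.gcd a b : ℝ)) + (z:ℝ) * z) :=
        sum_le_sum fun a ha => sum_le_sum fun b hb => step a ha b hb
    _ = J * (∑ a ∈ KK p z, ∑ b ∈ KK p z, (ww p z a * ww p z b * (Nat.gcd a b : ℝ))) +
        (#(KK p z) : ℝ) * (#(KK p z) : ℝ) * (z * z) := by
        simp only [sum_add_distrib, sum_const, nsmul_eq_mul, mul_sum]
        ring
    _ ≤ J * (1 / SS p z) + z * z * (z * z) := by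
        gcongr
        exact quad p z hz
    _ = _ := by ring

def AA (p J : ℕ) : ℕ := #{j ∈ Icc 1 J | (p * j + 1).Prime}

theorem AA_le (p z J : ℕ) (hp : 0 < p) (hz : 0 < z) : (AA p J : ℝ) ≤ J / SS p z + (z:ℝ) ^ 4 + z := by
  refine le_trans ?_ (add_le_add_left (sieve_sum p z J hz) _)
  have h1 : {j ∈ Icc 1 J | (p * j + 1).Prime} ⊆
      {j ∈ Icc 1 J | (p * j + 1).Prime ∧ z < p * j + 1} ∪ Icc 1 z := by
    intro j hj
    simp only [mem_filter, mem_union, mem_Icc] at *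
    by_cases h : z < p * j + 1
    · left; exact ⟨hj.1, hj.2, h⟩
    · right
      have : j ≤ p * j := Nat.le_mul_of_pos_left j hp
      omega
  have h2 : (AA p J : ℝ) ≤ (#{j ∈ Icc 1 J | (p * j + 1).Prime ∧ z < p * j + 1} : ℝ) + z := by
    have := (card_le_card h1).trans (card_union_le _ _)
    rw [Nat.card_Icc] at this
    unfold AA
    exact_mod_cast this
  refine h2.trans ?_
  gcongr
  rw [card_eq_sum_ones]
  push_cast
  rw [sum_filter]
  apply sum_le_sum
  intro j _
  split_ifs with h
  · have : {d ∈ KK p z | d ∣ p * j + 1} = {1} := by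
      ext d
      simp only [mem_filter, mem_singleton]
      constructor
      · rintro ⟨hd, hdv⟩
        rcases (Nat.dvd_prime h.1).1 hdv with h3 | h3
        · exact h3
        · have := KK_le hd
          omega
      · rintro rfl
        refine ⟨?_, one_dvd _⟩
        simp [KK]; omega
    rw [this, sum_singleton, ww_one p z hz]
    simp
  · positivity

theorem AA_dyadic (p i : ℕ) (hp : p.Prime) : (AA p (2 ^ i) : ℝ) ≤ 128 * 2 ^ i / (i + 1) := by
  rw [le_div_iff₀ (by positivity)]
  have hpow : (0:ℝ) < 2 ^ i := by positivity
  rcases Nat.lt_or_ge i 8 with h | h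
  · have h1 : AA p (2 ^ i) ≤ 2 ^ i := by
      have : #{j ∈ Icc 1 (2^i) | (p * j + 1).Prime} ≤ #(Icc 1 (2^i)) := card_le_card (filter_subset _ _)
      rw [Nat.card_Icc] at this
      exact this
    have h2 : (AA p (2 ^ i) : ℝ) ≤ 2 ^ i := by exact_mod_cast h1
    have h3 : (i:ℝ) < 8 := by exact_mod_cast h
    nlinarith
  · obtain ⟨m, hm⟩ : ∃ m, m = i / 8 := ⟨_, rfl⟩
    have hm1 : 1 ≤ m := by omega
    have him : i + 1 ≤ 16 * m := by omega
    have h8 : 8 * m ≤ i := by omega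
    have hS := SS_lower p (2 ^ m) hp
    have hA := AA_le p (2 ^ m) (2 ^ i) hp.pos (by positivity)
    push_cast at hS hA
    rw [Real.log_pow] at hS
    have hl2 := Real.log_two_gt_d9
    have hmr : (1:ℝ) ≤ m := by exact_mod_cast hm1
    have himr : (i:ℝ) + 1 ≤ 16 * m := by exact_mod_cast him
    have hSm : (m:ℝ) / 6 ≤ SS p (2 ^ m) := by nlinarith
    have t1 : (2:ℝ) ^ i / SS p (2 ^ m) ≤ 2 ^ i / (m / 6) := by gcongr
    have t1' : (2:ℝ) ^ i / (m / 6) * (i + 1) ≤ 96 * 2 ^ i := by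
      rw [div_mul_eq_mul_div, div_le_iff₀ (by positivity)]
      nlinarith
    have t2 : ((2:ℝ) ^ m) ^ 4 * ((2:ℝ) ^ m) ^ 4 ≤ 2 ^ i := by
      rw [← pow_add, ← pow_mul]
      exact pow_le_pow_right₀ (by norm_num) (by omega)
    have t3 : (m : ℝ) ≤ 2 ^ m := by exact_mod_cast (Nat.lt_two_pow_self).le
    have t4 : (1:ℝ) ≤ 2 ^ m := one_le_pow₀ (by norm_num)
    set x : ℝ := 2 ^ m
    have t5 : x ≤ x ^ 4 := le_self_pow₀ t4 (by norm_num)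
    have t6 : (x ^ 4 + x) * (i + 1) ≤ 32 * 2 ^ i := by
      calc (x ^ 4 + x) * (i + 1) ≤ (x ^ 4 + x ^ 4) * (16 * x ^ 4) := by
            gcongr
            linarith
        _ = 32 * (x ^ 4 * x ^ 4) := by ring
        _ ≤ _ := by gcongr
    have hi : (0:ℝ) ≤ i + 1 := by positivity
    calc (AA p (2 ^ i) : ℝ) * (i + 1) ≤ (2 ^ i / (m / 6) + x ^ 4 + x) * (i + 1) := by
          gcongr
          linarith
      _ = 2 ^ i / (m / 6) * (i + 1) + (x ^ 4 + x) * (i + 1) := by ring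
      _ ≤ _ := by linarith

/-- sum of `1/j` over `j ≤ N` with `pj+1` prime -/
theorem TT_le (p N : ℕ) (hp : p.Prime) :
    ∑ j ∈ Icc 1 N with (p * j + 1).Prime, (1:ℝ) / j ≤ 256 * (1 + Real.log (Nat.log 2 N + 1)) := by
  have hmaps : ∀ j ∈ {j ∈ Icc 1 N | (p * j + 1).Prime}, Nat.log 2 j ∈ range (Nat.log 2 N + 1) := by
    intro j hj
    simp only [mem_filter, mem_Icc] at hj
    rw [mem_range]
    exact Nat.lt_succ_of_le (Nat.log_mono_right hj.1.2)
  rw [← sum_fiberwise_of_maps_to hmaps]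
  have step : ∀ i ∈ range (Nat.log 2 N + 1),
      ∑ j ∈ {j ∈ Icc 1 N | (p * j + 1).Prime} with Nat.log 2 j = i, (1:ℝ) / j ≤ 256 * (1 / ((i:ℝ) + 1)) := by
    intro i _
    have hb : ∀ j ∈ {j ∈ {j ∈ Icc 1 N | (p * j + 1).Prime} | Nat.log 2 j = i}, (1:ℝ) / j ≤ 1 / 2 ^ i := by
      intro j hj
      simp only [mem_filter, mem_Icc] at hj
      have : 2 ^ i ≤ j := by
        rw [← hj.2]; exact Nat.pow_log_le_self 2 (by omega)
      have : (2:ℝ) ^ i ≤ j := by exact_mod_cast this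
      gcongr
    have hc : #{j ∈ {j ∈ Icc 1 N | (p * j + 1).Prime} | Nat.log 2 j = i} ≤ AA p (2 ^ (i + 1)) := by
      apply card_le_card
      intro j hj
      simp only [mem_filter, mem_Icc] at *
      refine ⟨⟨hj.1.1.1, ?_⟩, hj.1.2⟩
      rw [← hj.2]
      exact (Nat.lt_pow_succ_log_self (by norm_num) j).le
    have hA := AA_dyadic p (i + 1) hp
    refine (sum_le_card_nsmul _ _ _ hb).trans ?_
    rw [nsmul_eq_mul]
    have hc' : (#{j ∈ {j ∈ Icc 1 N | (p * j + 1).Prime} | Nat.log 2 j = i} : ℝ) ≤ AA p (2 ^ (i + 1)) := by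
      exact_mod_cast hc
    calc _ ≤ (128 * 2 ^ (i+1) / (((i+1:ℕ):ℝ) + 1)) * (1 / 2 ^ i) := by
          gcongr
          exact hc'.trans hA
      _ = 256 * (1 / (((i+1:ℕ):ℝ) + 1)) := by
          field_simp; ring
      _ ≤ _ := by
          push_cast
          gcongr
          linarith
  refine (sum_le_sum step).trans ?_
  rw [← mul_sum]
  gcongr
  have := harmonic_le_one_add_log (Nat.log 2 N + 1)
  unfold harmonic at this
  push_cast at this
  simpa using this

theorem prime_tail (N k : ℕ) :
    ∑ p ∈ Icc 1 N with p.Prime ∧ 2 ^ k ≤ p, (1:ℝ) / p ^ 2 ≤ 258 / (((k:ℝ) + 1) * 2 ^ k) := by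
  have hmaps : ∀ j ∈ {p ∈ Icc 1 N | p.Prime ∧ 2 ^ k ≤ p}, Nat.log 2 j ∈ Ico k (k + (Nat.log 2 N + 1)) := by
    intro j hj
    simp only [mem_filter, mem_Icc] at hj
    rw [mem_Ico]
    have := Nat.log_mono_right (b := 2) hj.1.2
    have := Nat.le_log_of_pow_le (b := 2) (by norm_num) hj.2.2
    omega
  rw [← sum_fiberwise_of_maps_to hmaps]
  have step : ∀ i ∈ Ico k (k + (Nat.log 2 N + 1)),
      ∑ j ∈ {p ∈ Icc 1 N | p.Prime ∧ 2 ^ k ≤ p} with Nat.log 2 j = i, (1:ℝ) / j ^ 2 ≤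
        129 / ((k:ℝ) + 1) * (1 / 2) ^ i := by
    intro i hi
    rw [mem_Ico] at hi
    have hb : ∀ j ∈ {j ∈ {p ∈ Icc 1 N | p.Prime ∧ 2 ^ k ≤ p} | Nat.log 2 j = i},
        (1:ℝ) / j ^ 2 ≤ 1 / (2 ^ i) ^ 2 := by
      intro j hj
      simp only [mem_filter, mem_Icc] at hj
      have : 2 ^ i ≤ j := by
        rw [← hj.2]; exact Nat.pow_log_le_self 2 (by omega)
      have : (2:ℝ) ^ i ≤ j := by exact_mod_cast this
      gcongr
    have hc : #{j ∈ {p ∈ Icc 1 N | p.Prime ∧ 2 ^ k ≤ p} | Nat.log 2 j = i} ≤ AA 2 (2 ^ i) + 1 := by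
      have : {j ∈ {p ∈ Icc 1 N | p.Prime ∧ 2 ^ k ≤ p} | Nat.log 2 j = i} ⊆
        insert 2 ({j ∈ Icc 1 (2 ^ i) | (2 * j + 1).Prime}.image (fun j => 2 * j + 1)) := by
        intro j hj
        simp only [mem_filter, mem_Icc, mem_insert, mem_image] at *
        have hlt : j < 2 ^ (i + 1) := by
          rw [← hj.2]
          exact (Nat.lt_pow_succ_log_self (by norm_num) j)
        rcases hj.1.2.1.eq_two_or_odd with h | h
        · left; exact h
        · right
          have h2 := hj.1.2.1.two_le
          refine ⟨j / 2, ⟨⟨by omega, by rw [pow_succ] at hlt; omega⟩, ?_⟩, by omega⟩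
          have : 2 * (j / 2) + 1 = j := by omega
          rw [this]; exact hj.1.2.1
      refine (card_le_card this).trans ((card_insert_le _ _).trans ?_)
      gcongr
      exact card_image_le
    have hA := AA_dyadic 2 i Nat.prime_two
    refine (sum_le_card_nsmul _ _ _ hb).trans ?_
    rw [nsmul_eq_mul]
    have hc' : (#{j ∈ {p ∈ Icc 1 N | p.Prime ∧ 2 ^ k ≤ p} | Nat.log 2 j = i} : ℝ) ≤ AA 2 (2 ^ i) + 1 := by
      exact_mod_cast hc
    have h1 : (1:ℝ) ≤ 2 ^ i / ((i:ℝ) + 1) := by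
      rw [le_div_iff₀ (by positivity), one_mul]
      exact_mod_cast (Nat.lt_two_pow_self (n := i))
    have hki : (k:ℝ) ≤ i := by exact_mod_cast hi.1
    calc _ ≤ (128 * 2 ^ i / ((i:ℝ) + 1) + 2 ^ i / ((i:ℝ) + 1)) * (1 / (2 ^ i) ^ 2) := by
          gcongr
          exact hc'.trans (add_le_add hA h1)
      _ = 129 / ((i:ℝ) + 1) * (1 / 2) ^ i := by
          rw [one_div_pow]; field_simp; ring
      _ ≤ _ := by
          gcongr
  refine (sum_le_sum step).trans ?_
  rw [← mul_sum, sum_Ico_eq_sum_range]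
  have e : ∑ i ∈ range (k + (Nat.log 2 N + 1) - k), ((1:ℝ)/2) ^ (k + i) ≤ (1/2)^k * 2 := by
    simp_rw [pow_add]
    rw [← mul_sum]
    gcongr
    exact sum_geometric_two_le _
  calc _ ≤ 129 / ((k:ℝ) + 1) * ((1/2)^k * 2) := by gcongr
    _ = _ := by rw [one_div_pow]; field_simp; ring

open Classical in
noncomputable def badc (D : Set ℕ) (N : ℕ) : ℕ := #{n ∈ Icc 1 N | n ∉ D}

theorem dens_iff (D : Set ℕ) : HasDensityOne D ↔
    Filter.Tendsto (fun N : ℕ => (badc D N : ℝ) / N) Filter.atTop (nhds 0) := by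
  classical
  have key : ∀ N : ℕ, Nat.card {n : ℕ | n ∈ Finset.Icc 1 N ∧ n ∈ D} + badc D N = N := by
    intro N
    have h1 : Nat.card {n : ℕ | n ∈ Finset.Icc 1 N ∧ n ∈ D} = #{n ∈ Icc 1 N | n ∈ D} := by
      exact Nat.subtype_card _ (fun x => by simp)
    rw [h1]
    have := card_filter_add_card_filter_not (s := Icc 1 N) (fun n => n ∈ D)
    rw [Nat.card_Icc, Nat.add_sub_cancel] at this
    unfold badc
    convert this using 1
  have e : ∀ᶠ N : ℕ in Filter.atTop, (Nat.card {n : ℕ | n ∈ Finset.Icc 1 N ∧ n ∈ D} : ℝ) / N =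
      1 - (badc D N : ℝ) / N := by
    filter_upwards [Filter.eventually_ge_atTop 1] with N hN
    have hN' : (0:ℝ) < N := by exact_mod_cast hN
    have h : (Nat.card {n : ℕ | n ∈ Finset.Icc 1 N ∧ n ∈ D} : ℝ) + badc D N = N := by
      exact_mod_cast key N
    field_simp
    linarith
  unfold HasDensityOne
  rw [Filter.tendsto_congr' e]
  constructor
  · intro h
    have := h.const_sub 1
    simpa using this
  · intro h
    have := h.const_sub 1
    simpa using this

theorem dens_inter (D₁ D₂ : Set ℕ) (h₁ : HasDensityOne D₁) (h₂ : HasDensityOne D₂) :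
    HasDensityOne (D₁ ∩ D₂) := by
  classical
  rw [dens_iff] at *
  have h := h₁.add h₂
  rw [add_zero] at h
  refine squeeze_zero (fun N => by positivity) (fun N => ?_) h
  rw [← add_div]
  gcongr
  have : badc (D₁ ∩ D₂) N ≤ badc D₁ N + badc D₂ N := by
    unfold badc
    refine le_trans (card_le_card ?_) (card_union_le _ _)
    intro n hn
    simp only [mem_filter, mem_union, Set.mem_inter_iff] at *
    tauto
  exact_mod_cast this

theorem mult_count (N m : ℕ) : ((#{n ∈ Icc 1 N | m ∣ n} : ℕ) : ℝ) ≤ (N:ℝ) * (1 / m) := by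
  have : {n ∈ Icc 1 N | m ∣ n} = {k ∈ range N.succ | k ≠ 0 ∧ m ∣ k} := by
    ext n; simp only [mem_filter, mem_Icc, mem_range]; constructor
    · rintro ⟨h, h2⟩; exact ⟨by omega, by omega, h2⟩
    · rintro ⟨h, h2, h3⟩; exact ⟨by omega, h3⟩
  rw [this, Nat.card_multiples', mul_one_div]
  exact Nat.cast_div_le

theorem mem_good {n : ℕ}
    (h1 : ∀ r : ℕ, r ^ 2 ∣ n → (r : ℝ) ^ 3 ≤ Real.log (Real.log n))
    (h2 : ∀ p q : ℕ, p.Prime → Real.log (Real.log n) < (p : ℝ) → q.Prime → q ≡ 1 [MOD p] →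
      ¬ p * q ∣ n) (hn : n ≠ 0) : PseudoSquareFree n ∧
      TwoCFree (Real.log (Real.log n)) n ∧ CSeparable (Real.log (Real.log n)) n := by
  obtain ⟨a, b, c, d⟩ := good_of h1 h2
  refine ⟨?_, a, d⟩
  intro p hp hpn
  refine ⟨fun h h' => absurd (a p hp h') (not_le.2 h), fun h => ?_⟩
  rcases Nat.lt_or_ge (n.factorization p) 2 with h' | h'
  · have : n.factorization p = 1 := by
      have := hp.factorization_pos_of_dvd hn hpn
      omega
    rw [this, pow_one]
    exact h.trans c
  · exact (b p _ hp h' (Nat.ordProj_dvd n p)).trans c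

theorem bad_bound (N R k : ℕ) (hR : 0 < R) (hY2 : 2 ≤ Real.log (Real.log N))
    (hYR : (R:ℝ) ^ 3 ≤ Real.log (Real.log N) / 2) (hk : (2:ℝ) ^ k ≤ Real.log (Real.log N) / 2)
    (hk' : Real.log (Real.log N) / 2 < 2 ^ (k + 1)) :
    (badc {n : ℕ | PseudoSquareFree n ∧
      TwoCFree (Real.log (Real.log n)) n ∧ CSeparable (Real.log (Real.log n)) n} N : ℝ) ≤
      Nat.sqrt N + N * (1 / R) + N * (792576 / ((k:ℝ) + 1)) := by
  classical
  set Y := Real.log (Real.log N) with hY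
  have hlogN0 : 0 ≤ Real.log N := Real.log_natCast_nonneg N
  have hlogN : 0 < Real.log N := by
    rcases hlogN0.lt_or_eq with h | h
    · exact h
    · rw [hY, ← h] at hY2; norm_num at hY2
  have hlogN1 : 1 ≤ Real.log N := by
    have : Y ≤ Real.log N := Real.log_le_self hlogN0
    linarith
  have cover : {n ∈ Icc 1 N | n ∉ {n : ℕ | PseudoSquareFree n ∧
      TwoCFree (Real.log (Real.log n)) n ∧ CSeparable (Real.log (Real.log n)) n}} ⊆
      Icc 1 (Nat.sqrt N) ∪ ((Ioc R N).biUnion (fun r => {n ∈ Icc 1 N | r ^ 2 ∣ n}) ∪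
      ({p ∈ Icc 1 N | p.Prime ∧ 2 ^ k ≤ p}).biUnion (fun p =>
        ({j ∈ Icc 1 N | (p * j + 1).Prime}).biUnion (fun j => {n ∈ Icc 1 N | p * (p * j + 1) ∣ n}))) := by
    intro n hn
    rw [mem_filter, mem_Icc, Set.mem_ofPred_eq] at hn
    obtain ⟨⟨hn1, hnN⟩, hbad⟩ := hn
    by_contra hcon
    simp only [mem_union, not_or] at hcon
    obtain ⟨c1, c2, c3⟩ := hcon
    have hs : Nat.sqrt N < n := by
      by_contra h
      exact c1 (mem_Icc.2 ⟨hn1, by omega⟩)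
    have hNn : N < n ^ 2 := by
      rw [sq]; exact Nat.sqrt_lt.1 hs
    have hNpos : 0 < N := by omega
    have hl : Real.log N ≤ 2 * Real.log n := by
      have : Real.log ((n:ℝ) ^ 2) = 2 * Real.log n := by rw [Real.log_pow]; norm_num
      rw [← this]
      apply Real.log_le_log
      · exact_mod_cast hNpos
      · exact_mod_cast hNn.le
    have hll : Y / 2 ≤ Real.log (Real.log n) := by
      have h1 : Y ≤ Real.log (2 * Real.log n) := Real.log_le_log hlogN hl
      rw [Real.log_mul (by norm_num) (by linarith)] at h1
      have := Real.log_two_lt_d9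
      linarith
    apply hbad
    apply mem_good _ _ (by omega)
    · intro r hr
      by_contra h
      push Not at h
      apply c2
      have hRr : R < r := by
        have : (R:ℝ) ^ 3 < (r:ℝ) ^ 3 := by linarith
        have := lt_of_pow_lt_pow_left₀ 3 (by positivity) this
        exact_mod_cast this
      have : r ^ 2 ≤ n := Nat.le_of_dvd (by omega) hr
      have : r ≤ r ^ 2 := Nat.le_self_pow (by norm_num) r
      rw [mem_biUnion]
      exact ⟨r, mem_Ioc.2 ⟨hRr, by omega⟩, by simp only [mem_filter, mem_Icc]; exact ⟨⟨hn1, hnN⟩, hr⟩⟩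
    · intro p q hp hlp hq hmod hd
      apply c3
      have hpk : 2 ^ k ≤ p := by
        have : (2:ℝ) ^ k ≤ p := by linarith
        exact_mod_cast this
      have hq1 : 1 < q := hq.one_lt
      obtain ⟨j, hj⟩ : p ∣ q - 1 := (Nat.modEq_iff_dvd' hq1.le).1 hmod.symm
      have hqj : q = p * j + 1 := by omega
      have hpqn : p * q ≤ n := Nat.le_of_dvd (by omega) hd
      have hpn : p ≤ p * q := Nat.le_mul_of_pos_right p hq.pos
      have hqn : q ≤ p * q := Nat.le_mul_of_pos_left q hp.pos
      have hjq : j ≤ p * j := Nat.le_mul_of_pos_left j hp.pos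
      have hj0 : 1 ≤ j := by
        rcases Nat.eq_zero_or_pos j with rfl | h
        · simp at hqj; omega
        · exact h
      rw [mem_biUnion]
      have := hp.pos
      refine ⟨p, mem_filter.2 ⟨mem_Icc.2 ⟨by omega, by omega⟩, hp, hpk⟩, ?_⟩
      rw [mem_biUnion]
      refine ⟨j, mem_filter.2 ⟨mem_Icc.2 ⟨hj0, by omega⟩, hqj ▸ hq⟩, ?_⟩
      rw [mem_filter, mem_Icc, ← hqj]
      exact ⟨⟨hn1, hnN⟩, hd⟩
  have hcard : (badc {n : ℕ | PseudoSquareFree n ∧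
      TwoCFree (Real.log (Real.log n)) n ∧ CSeparable (Real.log (Real.log n)) n} N : ℝ) ≤
      Nat.sqrt N + ((∑ r ∈ Ioc R N, ((#{n ∈ Icc 1 N | r ^ 2 ∣ n} : ℕ) : ℝ)) + 
      ∑ p ∈ Icc 1 N with p.Prime ∧ 2 ^ k ≤ p, ∑ j ∈ Icc 1 N with (p * j + 1).Prime, 
        ((#{n ∈ Icc 1 N | p * (p * j + 1) ∣ n} : ℕ) : ℝ)) := by
    have : badc {n : ℕ | PseudoSquareFree n ∧
      TwoCFree (Real.log (Real.log n)) n ∧ CSeparable (Real.log (Real.log n)) n} N ≤ 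
      Nat.sqrt N + ((∑ r ∈ Ioc R N, (#{n ∈ Icc 1 N | r ^ 2 ∣ n})) + 
      ∑ p ∈ Icc 1 N with p.Prime ∧ 2 ^ k ≤ p, ∑ j ∈ Icc 1 N with (p * j + 1).Prime, 
        (#{n ∈ Icc 1 N | p * (p * j + 1) ∣ n})) := by
      unfold badc
      have c0 : #(Icc 1 (Nat.sqrt N)) = Nat.sqrt N := by simp
      refine (card_le_card (fun n hn => cover (by simp only [mem_filter] at hn ⊢; exact hn))).trans ?_
      refine (card_union_le _ _).trans ?_
      rw [c0]
      refine add_le_add le_rfl ((card_union_le _ _).trans (add_le_add card_biUnion_le ?_))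
      exact card_biUnion_le.trans (sum_le_sum fun p _ => card_biUnion_le)
    exact_mod_cast this
  refine hcard.trans ?_
  rw [add_assoc]
  gcongr
  · calc _ ≤ ∑ r ∈ Ioc R N, (N:ℝ) * (1 / (r:ℝ) ^ 2) := by
          apply sum_le_sum; intro r _
          have := mult_count N (r ^ 2)
          push_cast at this
          exact this
      _ ≤ _ := by
          rw [← mul_sum]
          gcongr
          exact tail_sq R N hR
  · have hT : ∀ p ∈ {p ∈ Icc 1 N | p.Prime ∧ 2 ^ k ≤ p}, ∑ j ∈ Icc 1 N with (p * j + 1).Prime, 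
        ((#{n ∈ Icc 1 N | p * (p * j + 1) ∣ n} : ℕ) : ℝ) ≤ N * ((1 / (p:ℝ) ^ 2) * (256 * (3 + Y))) := by
      intro p hp
      simp only [mem_filter, mem_Icc] at hp
      have hp0 : (0:ℝ) < p := by exact_mod_cast hp.2.1.pos
      have hNpos' : (0:ℝ) < N := by
        have : 0 < N := by omega
        exact_mod_cast this
      have hlog : Real.log (Nat.log 2 N + 1) ≤ 2 + Y := by
        have h1 : (Nat.log 2 N : ℝ) * Real.log 2 ≤ Real.log N := by
          rw [← Real.log_pow]
          apply Real.log_le_log (by positivity)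
          exact_mod_cast Nat.pow_log_le_self 2 (by omega)
        have h2 : (Nat.log 2 N : ℝ) + 1 ≤ 3 * Real.log N := by
          have := Real.log_two_gt_d9
          have : (0:ℝ) ≤ Nat.log 2 N := by positivity
          nlinarith
        have h3 : Real.log ((Nat.log 2 N : ℝ) + 1) ≤ Real.log (3 * Real.log N) :=
          Real.log_le_log (by positivity) h2
        rw [Real.log_mul (by norm_num) (by linarith)] at h3
        have h4 : Real.log 3 ≤ 3 - 1 := Real.log_le_sub_one_of_pos (by norm_num)
        linarith
      calc _ ≤ ∑ j ∈ Icc 1 N with (p * j + 1).Prime, (N:ℝ) * ((1 / (p:ℝ) ^ 2) * (1 / j)) := by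
            apply sum_le_sum; intro j hj
            simp only [mem_filter, mem_Icc] at hj
            have hj0 : (0:ℝ) < j := by exact_mod_cast hj.1.1
            refine (mult_count N _).trans ?_
            rw [one_div_mul_one_div]
            push_cast
            refine mul_le_mul_of_nonneg_left ?_ hNpos'.le
            apply one_div_le_one_div_of_le (by positivity)
            nlinarith
        _ = N * ((1 / (p:ℝ) ^ 2) * ∑ j ∈ Icc 1 N with (p * j + 1).Prime, (1:ℝ) / j) := by
            rw [mul_sum, mul_sum]
        _ ≤ _ := by
            gcongr
            refine (TT_le p N hp.2.1).trans ?_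
            apply mul_le_mul_of_nonneg_left _ (by norm_num : (0:ℝ) ≤ 256)
            linarith
    refine (sum_le_sum hT).trans ?_
    rw [← mul_sum, ← sum_mul]
    gcongr
    have hpt := prime_tail N k
    have hx : (0:ℝ) < 2 ^ k := by positivity
    rw [pow_succ] at hk'
    calc _ ≤ 258 / (((k:ℝ) + 1) * 2 ^ k) * (256 * (12 * 2 ^ k)) := by
          gcongr
          linarith
      _ = _ := by field_simp; norm_num

theorem dens_good : HasDensityOne {n : ℕ | PseudoSquareFree n ∧
      TwoCFree (Real.log (Real.log n)) n ∧ CSeparable (Real.log (Real.log n)) n} := by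
  rw [dens_iff]
  rw [Metric.tendsto_atTop']
  intro ε hε
  obtain ⟨M, hM⟩ := exists_nat_gt (3 / ε)
  obtain ⟨K, hK⟩ := exists_nat_gt (3 * 792576 / ε)
  have hM0 : 0 < (M:ℝ) := lt_trans (by positivity) hM
  have hK0 : 0 < (K:ℝ) := lt_trans (by positivity) hK
  have hMn : 0 < M := by exact_mod_cast hM0
  have htend : Filter.Tendsto (fun N : ℕ => Real.log (Real.log (N:ℝ))) Filter.atTop Filter.atTop :=
    Real.tendsto_log_atTop.comp (Real.tendsto_log_atTop.comp tendsto_natCast_atTop_atTop)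
  have hev := (htend.eventually_ge_atTop (2 + 2 * (M:ℝ) ^ 3 + 2 * 2 ^ K)).and
    (Filter.eventually_ge_atTop (M ^ 2))
  obtain ⟨N0, hN0⟩ := Filter.eventually_atTop.1 hev
  refine ⟨N0, fun N hN => ?_⟩
  obtain ⟨hY, hNM⟩ := hN0 N hN.le
  set Y := Real.log (Real.log N) with hYdef
  have hM3 : (0:ℝ) < (M:ℝ) ^ 3 := by positivity
  have h2K : (0:ℝ) < 2 ^ K := by positivity
  obtain ⟨k, hk1, hk2⟩ : ∃ k : ℕ, (2:ℝ) ^ k ≤ Y / 2 ∧ Y / 2 < 2 ^ (k + 1) :=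
    exists_nat_pow_near (by linarith) (by norm_num)
  have hKk : K ≤ k := by
    have : (2:ℝ) ^ K < 2 ^ (k + 1) := by linarith
    have := (pow_lt_pow_iff_right₀ (by norm_num : (1:ℝ) < 2)).1 this
    omega
  have hb := bad_bound N M k hMn (by linarith) (by linarith) hk1 hk2
  have hN0' : 0 < N := lt_of_lt_of_le (by positivity) hNM
  have hNr : (0:ℝ) < N := by exact_mod_cast hN0'
  have hs : (Nat.sqrt N : ℝ) ≤ N * (1 / M) := by
    rw [mul_one_div, le_div_iff₀ hM0]
    have h1 : M ≤ Nat.sqrt N := by rw [Nat.le_sqrt, ← sq]; exact hNM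
    have h2 : Nat.sqrt N * M ≤ N := (Nat.mul_le_mul_left _ h1).trans (Nat.sqrt_le N)
    exact_mod_cast h2
  have a1 : 1 / (M:ℝ) < ε / 3 := by
    rw [div_lt_iff₀ hε] at hM
    rw [div_lt_iff₀ hM0]; linarith
  have a2 : 792576 / ((k:ℝ) + 1) < ε / 3 := by
    have : (K:ℝ) ≤ k := by exact_mod_cast hKk
    rw [div_lt_iff₀ hε] at hK
    rw [div_lt_iff₀ (by positivity)]; nlinarith
  rw [Real.dist_eq, sub_zero, abs_of_nonneg (by positivity), div_lt_iff₀ hNr]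
  nlinarith

/-- The set `D̂` of positive integers that are simultaneously pseudo-square-free,
`(2, log log n)`-free and `(log log n)`-separable has natural density `1`;
and in general the intersection of two sets of natural density `1` has natural density `1`. -/
theorem intersection_density_one :
    HasDensityOne {n : ℕ | PseudoSquareFree n ∧
      TwoCFree (Real.log (Real.log n)) n ∧ CSeparable (Real.log (Real.log n)) n} ∧
    ∀ D₁ D₂ : Set ℕ, HasDensityOne D₁ → HasDensityOne D₂ → HasDensityOne (D₁ ∩ D₂) :=
  ⟨dens_good, dens_inter⟩
end

section
/- Let G be a finite group that is an internal semidirect product G = A ⋉ B, where B ⊴ G, A ≤ G, A ∩ B = 1, AB = G, and A and B are cyclic of coprime orders. Let Z be the subgroup of G generated by all the normal Sylow subgroups of G (over all primes dividing |G|). Then Z is a cyclic normal Hall subgroup of G containing B, and Z has a cyclic complement U in G; in particular G = U ⋉ Z with U and Z cyclic of coprime orders, |B| divides |Z|, and |U| and |Z| depend only on the isomorphism type of G. -/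
/-- The subgroup of `G` generated by all the normal Sylow subgroups of `G`
(over all primes dividing the order of `G`). -/
def normalSylowProd (G : Type*) [Group G] : Subgroup G :=
  ⨆ (p : ℕ) (_ : p.Prime) (P : Sylow p G) (_ : (P : Subgroup G).Normal), (P : Subgroup G)

theorem sylow_le_nsp {G : Type*} [Group G] {p : ℕ} (hp : p.Prime) (P : Sylow p G)
    (hP : (P : Subgroup G).Normal) : (P : Subgroup G) ≤ normalSylowProd G :=
  le_iSup_of_le p (le_iSup_of_le hp (le_iSup_of_le P (le_iSup_of_le hP le_rfl)))

theorem nsp_le {G : Type*} [Group G] {K : Subgroup G}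
    (h : ∀ (p : ℕ) (_ : p.Prime) (P : Sylow p G), (P : Subgroup G).Normal → (P : Subgroup G) ≤ K) :
    normalSylowProd G ≤ K :=
  iSup_le fun p => iSup_le fun hp => iSup_le fun P => iSup_le fun hP => h p hp P hP

theorem nsp_normal (G : Type*) [Group G] : (normalSylowProd G).Normal := by
  unfold normalSylowProd
  refine @Subgroup.iSup_normal _ _ _ _ fun p => @Subgroup.iSup_normal _ _ _ _ fun hp =>
    @Subgroup.iSup_normal _ _ _ _ fun P => @Subgroup.iSup_normal _ _ _ _ fun hP => hP

theorem exists_normal_sylow {G : Type*} [Group G] [Finite G] {p : ℕ} (hp : p.Prime)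
    (hd : p ∣ Nat.card (normalSylowProd G)) : ∃ P : Sylow p G, (P : Subgroup G).Normal := by
  by_contra hno
  push Not at hno
  let S : Set (Subgroup G) := {N | N.Normal ∧ ¬ p ∣ Nat.card N}
  have hS : sSup S ∈ S := by
    apply CompleteLattice.WellFoundedGT.isSupClosedCompact (Subgroup G) inferInstance S
    · exact ⟨⊥, inferInstance, by simpa using hp.one_lt.ne'⟩
    · rintro H ⟨hH, hH'⟩ K ⟨hK, hK'⟩
      refine ⟨inferInstance, fun h => ?_⟩
      have h1 : Nat.card K * K.relIndex (H ⊔ K) = Nat.card (H ⊔ K : Subgroup G) :=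
        by
        rw [← Subgroup.relIndex_bot_left, ← Subgroup.relIndex_bot_left]
        exact Subgroup.relIndex_mul_relIndex _ _ _ bot_le le_sup_right
      rw [Subgroup.relIndex_sup_right] at h1
      rw [← h1] at h
      rcases hp.dvd_mul.1 h with h | h
      · exact hK' h
      · exact hH' (h.trans (Subgroup.relIndex_dvd_card K H))
  apply hS.2
  refine hd.trans (Subgroup.card_dvd_of_le (nsp_le fun q hq Q hQ => le_sSup ⟨hQ, fun h => ?_⟩))
  have := Fact.mk hq
  rw [Q.card_eq_multiplicity] at h
  have := (Nat.prime_dvd_prime_iff_eq hp hq).1 (hp.dvd_of_dvd_pow h)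
  subst this
  exact hno Q hQ

theorem nsp_nilpotent (G : Type*) [Group G] [Finite G] :
    Group.IsNilpotent (normalSylowProd G) := by
  refine ((Group.isNilpotent_of_finite_tfae (G := normalSylowProd G)).out 3 0).1 ?_
  intro p hp Q
  by_cases hd : p ∣ Nat.card (normalSylowProd G)
  · obtain ⟨P, hP⟩ := exists_normal_sylow hp.out hd
    have hle := sylow_le_nsp hp.out P hP
    have hn : ((P.subtype hle : Sylow p (normalSylowProd G)) :
        Subgroup (normalSylowProd G)).Normal := by
      rw [Sylow.coe_subtype]; infer_instance
    have := Sylow.unique_of_normal _ hn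
    rw [Subsingleton.elim Q (P.subtype hle)]
    exact hn
  · have : (Q : Subgroup (normalSylowProd G)) = ⊥ := by
      apply Subgroup.eq_bot_of_card_eq
      have h := Q.card_eq_multiplicity
      rwa [Nat.factorization_eq_zero_of_not_dvd hd, pow_zero] at h
    rw [this]; infer_instance

theorem nsp_hall (G : Type*) [Group G] [Finite G] :
    Nat.Coprime (Nat.card (normalSylowProd G)) (normalSylowProd G).index := by
  refine Nat.coprime_of_dvd fun p hp h1 h2 => ?_
  have := Fact.mk hp
  obtain ⟨P, hP⟩ := exists_normal_sylow hp h1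
  exact P.not_dvd_index (h2.trans (Subgroup.index_dvd_of_le (sylow_le_nsp hp P hP)))

theorem le_nsp {G : Type*} [Group G] [Finite G] (B : Subgroup G) [B.Normal] [IsCyclic B]
    (hc : Nat.Coprime (Nat.card B) B.index) : B ≤ normalSylowProd G := by
  rw [← Subgroup.relIndex_eq_one]
  by_contra hne
  obtain ⟨p, hp, hd⟩ := Nat.exists_prime_and_dvd hne
  have := Fact.mk hp
  have hpB : p ∣ Nat.card B := hd.trans (Subgroup.relIndex_dvd_card _ _)
  have hpi : ¬ p ∣ B.index := fun h => Nat.not_coprime_of_dvd_of_dvd hp.one_lt hpB h hc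
  obtain ⟨Q⟩ : Nonempty (Sylow p B) := inferInstance
  have hQ : (Q : Subgroup B).Normal := by
    let : CommGroup B := IsCyclic.commGroup
    exact Subgroup.normal_of_comm _
  have := Q.characteristic_of_normal hQ
  have hm : ((Q : Subgroup B).map B.subtype).Normal := inferInstance
  have hidx : ¬ p ∣ ((Q : Subgroup B).map B.subtype).index := by
    rw [Subgroup.index_map_subtype]
    exact hp.not_dvd_mul Q.not_dvd_index hpi
  have hle := sylow_le_nsp hp ((Q.2.map B.subtype).toSylow hidx) hm
  have hle' : (Q : Subgroup B) ≤ (normalSylowProd G).subgroupOf B := fun x hx =>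
    hle (Subgroup.mem_map_of_mem B.subtype hx)
  exact Q.not_dvd_index (hd.trans (Subgroup.index_dvd_of_le hle'))

theorem nsp_map_le {G G' : Type*} [Group G] [Group G'] [Finite G] (e : G ≃* G') :
    (normalSylowProd G).map (e : G →* G') ≤ normalSylowProd G' := by
  rw [Subgroup.map_le_iff_le_comap]
  refine nsp_le fun p hp P hP => ?_
  rw [← Subgroup.map_le_iff_le_comap]
  have := Fact.mk hp
  have hs : Function.Surjective (e : G →* G') := e.surjective
  exact sylow_le_nsp hp (P.mapSurjective hs) (hP.map _ hs)

theorem nsp_card_dvd {G G' : Type*} [Group G] [Group G'] [Finite G] (e : G ≃* G') :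
    Nat.card (normalSylowProd G) ∣ Nat.card (normalSylowProd G') := by
  have := Subgroup.card_dvd_of_le (nsp_map_le e)
  rwa [Subgroup.card_map_of_injective (f := (e : G →* G')) e.injective] at this

/-- If a finite group `G` is an internal semidirect product of cyclic subgroups `A` and `B`
of coprime orders with `B` normal, and `Z` is the subgroup generated by all normal Sylow
subgroups of `G`, then `Z` is a cyclic normal Hall subgroup containing `B` with a cyclic
complement `U` of order coprime to `|Z|`; moreover `|Z|` and `|U| = [G:Z]` are invariants
of the isomorphism type of `G`. -/
theorem coprime_metacyclic_canonical_decomposition (G : Type*) [Group G] [Finite G]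
    (A B : Subgroup G) [B.Normal] (hinf : A ⊓ B = ⊥) (hsup : A ⊔ B = ⊤)
    (hA : IsCyclic A) (hB : IsCyclic B)
    (hcop : Nat.Coprime (Nat.card A) (Nat.card B)) :
    IsCyclic (normalSylowProd G) ∧ (normalSylowProd G).Normal ∧
    Nat.Coprime (Nat.card (normalSylowProd G)) (normalSylowProd G).index ∧
    B ≤ normalSylowProd G ∧
    (∃ U : Subgroup G, IsCyclic U ∧ U ⊓ normalSylowProd G = ⊥ ∧
      U ⊔ normalSylowProd G = ⊤ ∧
      Nat.Coprime (Nat.card U) (Nat.card (normalSylowProd G))) ∧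
    ∀ (G' : Type*) [Group G'] [Finite G'], Nonempty (G ≃* G') →
      Nat.card (normalSylowProd G') = Nat.card (normalSylowProd G) ∧
      (normalSylowProd G').index = (normalSylowProd G).index := by
  have hquot : Function.Surjective ((QuotientGroup.mk' B).comp A.subtype) := by
    rw [← MonoidHom.range_eq_top, MonoidHom.range_comp, Subgroup.range_subtype]
    have h := congrArg (Subgroup.map (QuotientGroup.mk' B)) hsup
    rw [Subgroup.map_sup, QuotientGroup.map_mk'_self, sup_bot_eq,
      Subgroup.map_top_of_surjective _ (QuotientGroup.mk'_surjective B)] at h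
    exact h
  have hQc : IsCyclic (G ⧸ B) := isCyclic_of_surjective _ hquot
  have hidx : B.index ∣ Nat.card A := by
    rw [← Subgroup.relIndex_top_right, ← hsup, Subgroup.relIndex_sup_right]
    exact Subgroup.relIndex_dvd_card _ _
  have hc : Nat.Coprime (Nat.card B) B.index := (hcop.coprime_dvd_left hidx).symm
  have : IsZGroup G := isZGroup_of_coprime (f := B.subtype) (f' := QuotientGroup.mk' B)
    (by simp) hc
  have := nsp_nilpotent G
  have := nsp_normal G
  have hBZ := le_nsp B hc
  refine ⟨inferInstance, inferInstance, nsp_hall G, hBZ, ?_, ?_⟩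
  · obtain ⟨U, hU⟩ := Subgroup.exists_left_complement'_of_coprime (nsp_hall G)
    refine ⟨U, ?_, hU.disjoint.eq_bot, hU.sup_eq_top, ?_⟩
    · refine isCyclic_of_injective ((QuotientGroup.mk' B).comp U.subtype) ?_
      rw [injective_iff_map_eq_one]
      intro u hu
      have hu' : (u : G) ∈ B := (QuotientGroup.eq_one_iff (u : G)).1 hu
      have : (u : G) ∈ U ⊓ normalSylowProd G := ⟨u.2, hBZ hu'⟩
      rw [hU.disjoint.eq_bot] at this
      exact Subtype.ext (Subgroup.mem_bot.1 this)
    · rw [← hU.index_eq_card]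
      exact (nsp_hall G).symm
  · rintro G' _ _ ⟨e⟩
    have h1 : Nat.card (normalSylowProd G') = Nat.card (normalSylowProd G) :=
      Nat.dvd_antisymm (nsp_card_dvd e.symm) (nsp_card_dvd e)
    refine ⟨h1, ?_⟩
    have h2 := (normalSylowProd G).card_mul_index
    have h3 := (normalSylowProd G').card_mul_index
    rw [h1, ← Nat.card_congr e.toEquiv, ← h2] at h3
    exact Nat.eq_of_mul_eq_mul_left Nat.card_pos h3
end

section
/- Let c, d be positive integers and let θ, θ' : ℤ/c → Aut(ℤ/d) be group homomorphisms from the additive group ℤ/c to the automorphism group of the additive group ℤ/d. Then there exists a group isomorphism γ : (ℤ/d) ⋊_θ (ℤ/c) → (ℤ/d) ⋊_{θ'} (ℤ/c) mapping the subgroup {(b,0) : b ∈ ℤ/d} onto the subgroup {(b,0) : b ∈ ℤ/d} if and only if θ and θ' have the same image in Aut(ℤ/d). -/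
lemma range_le_of_iso (c d : ℕ)
    (θ θ' : Multiplicative (ZMod c) →* MulAut (Multiplicative (ZMod d)))
    (γ : (Multiplicative (ZMod d) ⋊[θ] Multiplicative (ZMod c)) ≃*
        (Multiplicative (ZMod d) ⋊[θ'] Multiplicative (ZMod c)))
    (h : Subgroup.map γ.toMonoidHom (SemidirectProduct.inl (φ := θ)).range =
        (SemidirectProduct.inl (φ := θ')).range) : θ.range ≤ θ'.range := by
  rintro _ ⟨g, rfl⟩
  refine ⟨(γ (SemidirectProduct.inr g)).right, ?_⟩
  ext1 x
  have hx : SemidirectProduct.inl (φ := θ') x ∈ (SemidirectProduct.inl (φ := θ')).range := ⟨x, rfl⟩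
  rw [← h] at hx
  obtain ⟨_, ⟨n, rfl⟩, hn⟩ := hx
  change γ (SemidirectProduct.inl n) = SemidirectProduct.inl x at hn
  obtain ⟨m, hm⟩ := MonoidHom.map_cyclic (θ g).toMonoidHom
  have hm' : ∀ y, θ g y = y ^ m := hm
  have h1 : γ (SemidirectProduct.inl (θ g n)) = SemidirectProduct.inl (θ g x) := by
    rw [hm', hm', map_zpow, map_zpow, hn, map_zpow]
  rw [SemidirectProduct.inl_aut, map_inv, map_mul, map_mul, map_inv, hn, mul_inv_eq_iff_eq_mul] at h1
  have h2 := congrArg SemidirectProduct.left h1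
  simp only [SemidirectProduct.mul_left, SemidirectProduct.left_inl,
    SemidirectProduct.right_inl, map_one, MulAut.one_apply] at h2
  rw [mul_comm] at h2
  exact mul_right_cancel h2

lemma exists_unit_of_range_eq (c : ℕ) (hc : 0 < c) {A : Type*} [Group A]
    (θ θ' : Multiplicative (ZMod c) →* A) (h : θ.range = θ'.range) :
    ∃ β : Multiplicative (ZMod c) ≃* Multiplicative (ZMod c), ∀ g, θ' (β g) = θ g := by
  have : NeZero c := ⟨hc.ne'⟩
  set t : Multiplicative (ZMod c) := Multiplicative.ofAdd 1 with ht
  have hgen : ∀ x : ZMod c, Multiplicative.ofAdd x = t ^ x.val := by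
    intro x
    rw [ht, ← ofAdd_nsmul, nsmul_one, ZMod.natCast_zmod_val]
  have htc : t ^ c = 1 := by
    rw [ht, ← ofAdd_nsmul, nsmul_one, ZMod.natCast_self, ofAdd_zero]
  have key : ∀ φ : Multiplicative (ZMod c) →* A, φ.range = Subgroup.zpowers (φ t) := by
    intro φ
    apply le_antisymm
    · rintro _ ⟨g, rfl⟩
      have := hgen g.toAdd
      rw [ofAdd_toAdd] at this
      rw [this, map_pow]
      exact Subgroup.npow_mem_zpowers _ _
    · rw [Subgroup.zpowers_le]
      exact ⟨t, rfl⟩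
  have hz : Subgroup.zpowers (θ t) = Subgroup.zpowers (θ' t) := by rw [← key, ← key, h]
  have ho : orderOf (θ t) = orderOf (θ' t) := by
    rw [← Nat.card_zpowers, ← Nat.card_zpowers, hz]
  have hdvd : orderOf (θ' t) ∣ c := by
    apply orderOf_dvd_of_pow_eq_one
    rw [← map_pow, htc, map_one]
  have hpos : 0 < orderOf (θ' t) := Nat.pos_of_dvd_of_pos hdvd hc
  have hmem : θ t ∈ θ'.range := h ▸ ⟨t, rfl⟩
  obtain ⟨g, hg⟩ := hmem
  obtain ⟨k, hk⟩ : ∃ k : ℕ, θ t = θ' t ^ k := by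
    refine ⟨g.toAdd.val, ?_⟩
    rw [← map_pow, ← hgen, ofAdd_toAdd, hg]
  have hcop : Nat.Coprime k (orderOf (θ' t)) := by
    have h1 := ho
    have hf : IsOfFinOrder (θ' t) := orderOf_pos_iff.1 hpos
    rw [hk, hf.orderOf_pow] at h1
    rw [Nat.coprime_comm]
    rcases Nat.div_eq_self.1 h1 with h2 | h2
    · omega
    · exact h2
  obtain ⟨u, hu⟩ := ZMod.unitsMap_surjective hdvd (ZMod.unitOfCoprime k hcop)
  have hu' : θ' t ^ (u : ZMod c).val = θ' t ^ k := by
    rw [pow_eq_pow_iff_modEq, ← ZMod.natCast_eq_natCast_iff]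
    have := congrArg Units.val hu
    rw [ZMod.unitsMap_val, ZMod.coe_unitOfCoprime] at this
    rw [← this, ZMod.natCast_val]
  refine ⟨AddEquiv.toMultiplicative (DistribMulAction.toAddEquiv (ZMod c) u), fun g => ?_⟩
  set β := AddEquiv.toMultiplicative (DistribMulAction.toAddEquiv (ZMod c) u) with hβ
  have hbt : β t = t ^ (u : ZMod c).val := by
    rw [← hgen]
    change Multiplicative.ofAdd (u • (1 : ZMod c)) = _
    rw [Units.smul_def, smul_eq_mul, mul_one]
  have hg := hgen g.toAdd
  rw [ofAdd_toAdd] at hg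
  rw [hg, map_pow, map_pow, hbt, map_pow, hu', ← hk, map_pow]

/-- For homomorphisms `θ, θ' : ℤ/c → Aut(ℤ/d)`, there is an isomorphism of the semidirect
products `(ℤ/d) ⋊[θ] (ℤ/c) ≃* (ℤ/d) ⋊[θ'] (ℤ/c)` carrying the canonical copy of `ℤ/d`
onto the canonical copy of `ℤ/d` if and only if `θ` and `θ'` have the same image in
`Aut(ℤ/d)`. -/
theorem semidirectProduct_zmod_iso_iff_range_eq (c d : ℕ) (hc : 0 < c) (hd : 0 < d)
    (θ θ' : Multiplicative (ZMod c) →* MulAut (Multiplicative (ZMod d))) :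
    (∃ γ : (Multiplicative (ZMod d) ⋊[θ] Multiplicative (ZMod c)) ≃*
        (Multiplicative (ZMod d) ⋊[θ'] Multiplicative (ZMod c)),
      Subgroup.map γ.toMonoidHom (SemidirectProduct.inl (φ := θ)).range =
        (SemidirectProduct.inl (φ := θ')).range) ↔
    θ.range = θ'.range := by
  constructor
  · rintro ⟨γ, h⟩
    refine le_antisymm (range_le_of_iso c d θ θ' γ h) (range_le_of_iso c d θ' θ γ.symm ?_)
    rw [← h, Subgroup.map_map]
    convert Subgroup.map_id _
    ext1 x
    exact γ.symm_apply_apply x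
  · intro h
    obtain ⟨β, hβ⟩ := exists_unit_of_range_eq c hc θ θ' h
    refine ⟨SemidirectProduct.congr (MulEquiv.refl _) β ?_, ?_⟩
    · intro g
      ext1 x
      simp [hβ]
    · rw [← MonoidHom.range_comp]
      congr 1
      refine MonoidHom.ext fun x => SemidirectProduct.ext rfl ?_
      exact map_one β
end

section
/- Let G be a group, let y ∈ G have order 2^f for some f ≥ 0, and let x ∈ G have finite odd order. If x⁻¹yx ∈ ⟨y⟩, then x and y commute, i.e., x⁻¹yx = y. -/
/-- If `y` has order `2 ^ f`, `x` has finite odd order, and `x⁻¹ * y * x ∈ ⟨y⟩`,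
then `x` and `y` commute. -/
theorem conj_eq_self_of_odd_order (G : Type*) [Group G] (x y : G) (f : ℕ)
    (hy : orderOf y = 2 ^ f) (hx : Odd (orderOf x)) (hx0 : 0 < orderOf x)
    (h : x⁻¹ * y * x ∈ Subgroup.zpowers y) :
    x⁻¹ * y * x = y := by
  obtain ⟨k, hk⟩ := Subgroup.mem_zpowers_iff.mp h
  have key : ∀ n : ℕ, (x ^ n)⁻¹ * y * x ^ n = y ^ (k ^ n) := by
    intro n
    induction n with
    | zero => simp
    | succ n ih =>
      have h1 : (x ^ (n + 1))⁻¹ * y * x ^ (n + 1) = x⁻¹ * ((x ^ n)⁻¹ * y * x ^ n) * x := by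
        rw [pow_succ]; group
      have h2 : x⁻¹ * y ^ (k ^ n) * x = (x⁻¹ * y * x) ^ (k ^ n) := by
        have := conj_zpow (a := x⁻¹) (b := y) (i := k ^ n)
        rw [inv_inv] at this
        exact this.symm
      rw [h1, ih, h2, ← hk, ← zpow_mul, pow_succ, mul_comm]
  have h3 : y ^ (k ^ orderOf x) = y ^ (1 : ℤ) := by
    rw [← key, pow_orderOf_eq_one]; simp
  rw [← hk]
  rcases Nat.eq_zero_or_pos f with hf | hf
  · subst hf
    have : y = 1 := by simpa using hy
    simp [this]
  have h4 : ((2 : ℤ) ^ f) ∣ k ^ orderOf x - 1 := by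
    have := (orderOf_dvd_sub_iff_zpow_eq_zpow (x := y)).mpr h3
    rw [hy] at this
    exact_mod_cast this
  have hodd : Odd k := by
    have h5 : (2 : ℤ) ∣ k ^ orderOf x - 1 := (dvd_pow_self 2 hf.ne').trans h4
    have h6 : Odd (k ^ orderOf x) := by
      obtain ⟨c, hc⟩ := h5
      exact ⟨c, by linarith⟩
    exact (Int.odd_pow' hx0.ne').mp h6
  have hs : Odd (∑ i ∈ Finset.range (orderOf x), k ^ i) := by
    have hp : ∀ n : ℕ, ∃ c : ℤ, ∑ i ∈ Finset.range n, k ^ i = n + 2 * c := by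
      intro n
      induction n with
      | zero => exact ⟨0, by simp⟩
      | succ n ih =>
        obtain ⟨c, hc⟩ := ih
        obtain ⟨d, hd⟩ := hodd.pow (n := n)
        refine ⟨c + d, ?_⟩
        rw [Finset.sum_range_succ, hc, hd]
        push_cast
        ring
    obtain ⟨c, hc⟩ := hp (orderOf x)
    obtain ⟨m, hm⟩ := hx
    refine ⟨m + c, ?_⟩
    rw [hc, hm]
    push_cast
    ring
  have h7 : ((2 : ℤ) ^ f) ∣ k - 1 := by
    rw [← geom_sum_mul] at h4
    refine IsCoprime.dvd_of_dvd_mul_left ?_ h4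
    apply IsCoprime.pow_left
    obtain ⟨c, hc⟩ := hs
    exact ⟨-c, 1, by rw [hc]; ring⟩
  have h8 : y ^ k = y ^ (1 : ℤ) := by
    rw [← orderOf_dvd_sub_iff_zpow_eq_zpow, hy]
    exact_mod_cast h7
  simpa using h8
end
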